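/- arXiv:2202.09833 — 5 statements merged into one kernel-verified Lean document; each statement's English description precedes it below -/
import Mathlib

section
/- Let n ≥ 1, let a₁,…,aₙ be nonzero real numbers, set ζ_c := max_{i,j} |aᵢ|/|aⱼ|, and let ζ > 0 be real. For x, V ∈ ℝⁿ define yᵢ := √|aᵢ|·ζ_c^{1/4}·xᵢ and Wᵢ := √|aᵢ|·ζ_c^{1/4}·Vᵢ. Then (Σᵢ aᵢ²xᵢ²)·(Σⱼ Vⱼ²) − ζ·(Σₖ aₖxₖVₖ)² ≤ (Σᵢ yᵢ²)·(Σⱼ Wⱼ²) − (ζ/ζ_c)·(Σₖ sign(aₖ)·yₖWₖ)². In particular, whenever the right-hand side (the isotropic comparison form g_iso with parameter ζ/ζ_c, evaluated at the rescaled point y and rescaled vector W) is ≤ 0, the left-hand side (the Morse form g at (x,V)) is also ≤ 0; i.e., the lightcones of g_iso are narrower than those of g. -/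
/-!
With `q = ζc ^ (1/4)`, the rescaling gives `yᵢ² = q² |aᵢ| xᵢ²`, `Wⱼ² = q² |aⱼ| Vⱼ²` and
`sign(aₖ) yₖ Wₖ = q² aₖ xₖ Vₖ`. Since `q⁴ = ζc`, the two subtracted squares coincide, and the claim
reduces to `(∑ aᵢ² xᵢ²)(∑ Vⱼ²) ≤ ζc (∑ |aᵢ| xᵢ²)(∑ |aⱼ| Vⱼ²)`. This holds term by term in the
expanded double sum, because `|aᵢ| ≤ ζc |aⱼ|` by the definition of `ζc`.
-/

/-- For nonzero constants `a₁,…,aₙ`, anisotropy constant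
`ζc = max_{i,j} |aᵢ|/|aⱼ|`, and `ζ > 0`, the Morse quadratic form at `(x,V)` is
bounded above by the isotropic comparison form with parameter `ζ/ζc` evaluated
at the rescaled point `y` and vector `W`, where `yᵢ = √|aᵢ| ζc^{1/4} xᵢ` and
`Wᵢ = √|aᵢ| ζc^{1/4} Vᵢ`.  Hence the lightcones of `g_iso` are narrower than
those of `g`. -/
theorem morse_le_isotropic_comparison
    (n : ℕ) (hn : 1 ≤ n) (a : Fin n → ℝ) (ha : ∀ i, a i ≠ 0)
    (ζ : ℝ) (hζ : 0 < ζ) (ζc : ℝ)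
    (hζc : ζc = Finset.sup' Finset.univ
      (Finset.univ_nonempty_iff.mpr ⟨(⟨0, by omega⟩, ⟨0, by omega⟩)⟩)
      (fun p : Fin n × Fin n => |a p.1| / |a p.2|))
    (x V : Fin n → ℝ)
    (y W : Fin n → ℝ)
    (hy : ∀ i, y i = Real.sqrt |a i| * ζc ^ ((1 : ℝ) / 4) * x i)
    (hW : ∀ i, W i = Real.sqrt |a i| * ζc ^ ((1 : ℝ) / 4) * V i) :
    (∑ i, (a i) ^ 2 * (x i) ^ 2) * (∑ j, (V j) ^ 2)
        - ζ * (∑ k, a k * x k * V k) ^ 2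
      ≤ (∑ i, (y i) ^ 2) * (∑ j, (W j) ^ 2)
        - (ζ / ζc) * (∑ k, Real.sign (a k) * y k * W k) ^ 2 := by
  have hle : ∀ i j, |a i| ≤ ζc * |a j| := by
    intro i j
    rw [← div_le_iff₀ (abs_pos.mpr (ha j)), hζc]
    exact Finset.le_sup' (fun p : Fin n × Fin n => |a p.1| / |a p.2|) (Finset.mem_univ (i, j))
  have hpos : 0 < ζc := by
    have h0 := abs_pos.mpr (ha ⟨0, by omega⟩)
    exact pos_of_mul_pos_left (h0.trans_le (hle ⟨0, by omega⟩ ⟨0, by omega⟩)) h0.le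
  have hq : (ζc ^ ((1 : ℝ) / 4)) ^ 4 = ζc := by
    rw [← Real.rpow_natCast, ← Real.rpow_mul hpos.le]
    norm_num
  generalize ζc ^ ((1 : ℝ) / 4) = q at hy hW hq
  have hsq : ∀ i, Real.sqrt |a i| ^ 2 = |a i| := fun i => Real.sq_sqrt (abs_nonneg _)
  have hY : ∑ i, y i ^ 2 = q ^ 2 * ∑ i, |a i| * x i ^ 2 := by
    rw [Finset.mul_sum]
    refine Finset.sum_congr rfl fun i _ => ?_
    rw [hy, mul_pow, mul_pow, hsq]
    ring
  have hV : ∑ i, W i ^ 2 = q ^ 2 * ∑ i, |a i| * V i ^ 2 := by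
    rw [Finset.mul_sum]
    refine Finset.sum_congr rfl fun i _ => ?_
    rw [hW, mul_pow, mul_pow, hsq]
    ring
  have hS : ∑ k, Real.sign (a k) * y k * W k = q ^ 2 * ∑ k, a k * x k * V k := by
    rw [Finset.mul_sum]
    refine Finset.sum_congr rfl fun k _ => ?_
    have hsign : Real.sign (a k) * |a k| = a k := by
      rcases lt_or_gt_of_ne (ha k) with h | h
      · rw [Real.sign_of_neg h, abs_of_neg h]
        ring
      · rw [Real.sign_of_pos h, abs_of_pos h]
        ring
    rw [hy, hW]
    calc _ = q ^ 2 * (Real.sign (a k) * Real.sqrt |a k| ^ 2 * x k * V k) := by ring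
      _ = _ := by rw [hsq, hsign]
  have hcone : ζ / ζc * (∑ k, Real.sign (a k) * y k * W k) ^ 2
      = ζ * (∑ k, a k * x k * V k) ^ 2 := by
    rw [hS, mul_pow, ← pow_mul, hq, ← mul_assoc, div_mul_cancel₀ _ hpos.ne']
  have hprod : (∑ i, y i ^ 2) * (∑ j, W j ^ 2)
      = ζc * ((∑ i, |a i| * x i ^ 2) * ∑ j, |a j| * V j ^ 2) := by
    rw [hY, hV, ← hq]
    ring
  rw [hcone, hprod]
  refine sub_le_sub_right ?_ _
  rw [Finset.sum_mul_sum, Finset.sum_mul_sum, Finset.mul_sum]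
  refine Finset.sum_le_sum fun i _ => ?_
  rw [Finset.mul_sum]
  refine Finset.sum_le_sum fun j _ => ?_
  calc a i ^ 2 * x i ^ 2 * V j ^ 2 = |a i| * (|a i| * x i ^ 2 * V j ^ 2) := by
        rw [← sq_abs (a i)]
        ring
    _ ≤ ζc * |a j| * (|a i| * x i ^ 2 * V j ^ 2) :=
        mul_le_mul_of_nonneg_right (hle i j) (by positivity)
    _ = _ := by ring
end

section
/- Let ν ∈ (1,2), and let 0 < a ≤ A be real numbers with A²/a² ≤ min{ν, (3ν+2)/5}. Let r₀, ρ₀ > 0, and let P, R : ℝ → ℝ be functions differentiable at 0 satisfying a·ρ₀² ≤ P(0) ≤ A·ρ₀², a·r₀² ≤ R(0) ≤ A·r₀², a ≤ P′(0) ≤ A, and a ≤ R′(0) ≤ A. Define F(ε) := ((ρ₀²+ε)(r₀²+ε))^ν · (P(ε)+R(ε)) / ((ρ₀²+ε)²·R(ε) + (r₀²+ε)²·P(ε)) for ε in a neighborhood of 0. Then F′(0) ≥ 0. -/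
/-!
Write `x = ρ₀²`, `y = r₀²`, `p = P 0 = u x`, `q = R 0 = v y`, `s = P' 0`, `t = R' 0`, so that
`u, v, s, t ∈ [a, A]`. Up to a positive factor, the derivative of `F` at `0` is
`ν (x+y)(p+q)(x²q+y²p) + x y (x²-y²)(s q - t p) - 2 x y (p+q)(x q + y p)`.
This is symmetric under exchanging `(x, p, s)` and `(y, q, t)`, so one may take `y ≤ x`. Then
`s q - t p ≥ a q - A p`, and the resulting lower bound is `x y` times a cubic form in `x, y` whose
four coefficients are all nonnegative. The outer ones need only `A ≤ ν a`; the inner ones are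
smallest at extreme values of `u, v`, where `cross_coeff` (and with it the bound
`5 A² ≤ (3ν+2) a²`) applies.
-/

/-- Nonnegativity of the `x²y` coefficient at its extremal point `u = A`, `v = a`. Eliminating `ν`
through `5A² ≤ (3ν+2)a²` leaves, with `k = A/a`, the polynomial
`(k - 1)(5k³ + 10k² + 7k - 1)`. -/
lemma cross_coeff {ν a A : ℝ} (ha : 0 < a) (haA : a ≤ A)
    (h : 5 * A ^ 2 ≤ (3 * ν + 2) * a ^ 2) :
    2 * A ^ 2 + 2 * A * a - a ^ 2 ≤ ν * (A ^ 2 + A * a + a ^ 2) := by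
  have hA : 0 < A := ha.trans_le haA
  have h1 : 0 ≤ ((3 * ν + 2) * a ^ 2 - 5 * A ^ 2) * (A ^ 2 + A * a + a ^ 2) :=
    mul_nonneg (by linarith) (by positivity)
  have h2 : 0 ≤ (A - a) * (5 * A ^ 3 + 10 * A ^ 2 * a + 7 * A * a ^ 2 - a ^ 3) := by
    have : a ^ 3 ≤ A ^ 3 := pow_le_pow_left₀ ha.le haA 3
    have : 0 ≤ A ^ 2 * a := by positivity
    have : 0 ≤ A * a ^ 2 := by positivity
    have : 0 ≤ A ^ 3 := by positivity
    exact mul_nonneg (by linarith) (by linarith)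
  have h3 : 0 ≤ (3 * a ^ 2) *
      (ν * (A ^ 2 + A * a + a ^ 2) - (2 * A ^ 2 + 2 * A * a - a ^ 2)) := by
    nlinarith
  have := nonneg_of_mul_nonneg_right h3 (by positivity)
  linarith

/-- The numerator of the logarithmic derivative of `F` is nonnegative when `y ≤ x`. -/
lemma numerator_nonneg_of_le {ν a A x y p q s t : ℝ} (hν₂ : ν < 2)
    (hν₁ : 1 < ν) (ha : 0 < a) (haA : a ≤ A)
    (h₁ : A ^ 2 ≤ ν * a ^ 2) (h₂ : 5 * A ^ 2 ≤ (3 * ν + 2) * a ^ 2)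
    (hy : 0 < y) (hyx : y ≤ x)
    (hpl : a * x ≤ p) (hpu : p ≤ A * x) (hql : a * y ≤ q) (hqu : q ≤ A * y)
    (hs : a ≤ s) (ht : t ≤ A) :
    0 ≤ ν * (x + y) * (p + q) * (x ^ 2 * q + y ^ 2 * p)
      + x * y * (x ^ 2 - y ^ 2) * (s * q - t * p)
      - 2 * x * y * (p + q) * (x * q + y * p) := by
  have hx : 0 < x := hy.trans_le hyx
  obtain ⟨u, rfl⟩ : ∃ u, p = u * x := ⟨p / x, by field_simp⟩
  obtain ⟨v, rfl⟩ : ∃ v, q = v * y := ⟨q / y, by field_simp⟩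
  have hul := le_of_mul_le_mul_right hpl hx
  have huu := le_of_mul_le_mul_right hpu hx
  have hvl := le_of_mul_le_mul_right hql hy
  have hvu := le_of_mul_le_mul_right hqu hy
  have hu : 0 < u := ha.trans_le hul
  have hv : 0 < v := ha.trans_le hvl
  have hA : 0 < A := ha.trans_le haA
  have hAν : A ≤ ν * a := by
    refine le_of_mul_le_mul_right (a := a) ?_ ha
    nlinarith
  have hc := cross_coeff ha haA h₂
  have hνv : ν * a ≤ ν * v := by nlinarith
  have hνu : ν * a ≤ ν * u := by nlinarith
  have c3 : 0 ≤ u * (ν * v - A) := mul_nonneg hu.le (by linarith)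
  have c0 : 0 ≤ v * (ν * u - a) := mul_nonneg hv.le (by linarith)
  have c2 : 0 ≤ ν * (u * v + u ^ 2 + v ^ 2) + a * v - 2 * u ^ 2 - 2 * u * v := by
    -- decreasing in `u`, then increasing in `v`
    have e1 : 0 ≤ (2 - ν) * ((A - u) * (A + u + v)) :=
      mul_nonneg (by linarith) (mul_nonneg (by linarith) (by linarith))
    have e2 : 0 ≤ (v - a) * ((ν - 2) * A + ν * (v + a) + a) :=
      mul_nonneg (by linarith) (by nlinarith)
    linarith
  have c1 : 0 ≤ ν * (u * v + u ^ 2 + v ^ 2) + A * u - 2 * u * v - 2 * v ^ 2 := by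
    -- decreasing in `v`, then increasing in `u`
    have e1 : 0 ≤ (2 - ν) * ((A - v) * (A + u + v)) :=
      mul_nonneg (by linarith) (mul_nonneg (by linarith) (by linarith))
    have e2 : 0 ≤ (u - a) * ((ν - 2) * A + ν * (u + a) + A) :=
      mul_nonneg (by linarith) (by nlinarith)
    have e3 : 0 ≤ a * (A - a) := mul_nonneg ha.le (by linarith)
    linarith
  have hst : 0 ≤ x * y * (x ^ 2 - y ^ 2) * ((s - a) * (v * y) + (A - t) * (u * x)) := by
    have : 0 ≤ x ^ 2 - y ^ 2 := by nlinarith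
    have : 0 ≤ s - a := by linarith
    have : 0 ≤ A - t := by linarith
    positivity
  have hcubic : 0 ≤ x * y * (u * (ν * v - A) * x ^ 3
      + (ν * (u * v + u ^ 2 + v ^ 2) + a * v - 2 * u ^ 2 - 2 * u * v) * (x ^ 2 * y)
      + (ν * (u * v + u ^ 2 + v ^ 2) + A * u - 2 * u * v - 2 * v ^ 2) * (x * y ^ 2)
      + v * (ν * u - a) * y ^ 3) := by
    have := mul_nonneg c3 (pow_pos hx 3).le
    have := mul_nonneg c2 (by positivity : 0 ≤ x ^ 2 * y)
    have := mul_nonneg c1 (by positivity : 0 ≤ x * y ^ 2)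
    have := mul_nonneg c0 (pow_pos hy 3).le
    exact mul_nonneg (by positivity) (by linarith)
  linear_combination hst + hcubic

/-- The key calculus inequality: with `ν ∈ (1,2)`,
`0 < a ≤ A`, `A²/a² ≤ min {ν, (3ν+2)/5}`, `r₀, ρ₀ > 0`, and `P, R`
differentiable at `0` with the stated bounds on their values and derivatives,
the function
`F ε = ((ρ₀²+ε)(r₀²+ε))^ν (P ε + R ε) / ((ρ₀²+ε)² R ε + (r₀²+ε)² P ε)`
has nonnegative derivative at `0`. -/
theorem key_derivative_nonneg
    (ν a A r₀ ρ₀ : ℝ) (hν₁ : 1 < ν) (hν₂ : ν < 2)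
    (ha : 0 < a) (haA : a ≤ A)
    (hAa : A ^ 2 / a ^ 2 ≤ min ν ((3 * ν + 2) / 5))
    (hr₀ : 0 < r₀) (hρ₀ : 0 < ρ₀)
    (P R : ℝ → ℝ)
    (hP : DifferentiableAt ℝ P 0) (hR : DifferentiableAt ℝ R 0)
    (hP0l : a * ρ₀ ^ 2 ≤ P 0) (hP0u : P 0 ≤ A * ρ₀ ^ 2)
    (hR0l : a * r₀ ^ 2 ≤ R 0) (hR0u : R 0 ≤ A * r₀ ^ 2)
    (hP'l : a ≤ deriv P 0) (hP'u : deriv P 0 ≤ A)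
    (hR'l : a ≤ deriv R 0) (hR'u : deriv R 0 ≤ A) :
    0 ≤ deriv (fun ε : ℝ =>
      ((ρ₀ ^ 2 + ε) * (r₀ ^ 2 + ε)) ^ ν * (P ε + R ε) /
        ((ρ₀ ^ 2 + ε) ^ 2 * R ε + (r₀ ^ 2 + ε) ^ 2 * P ε)) 0 := by
  obtain ⟨hmin₁, hmin₂⟩ := le_min_iff.mp hAa
  have ha2 : 0 < a ^ 2 := by positivity
  have h₁ : A ^ 2 ≤ ν * a ^ 2 := (div_le_iff₀ ha2).mp hmin₁
  have h₂ : 5 * A ^ 2 ≤ (3 * ν + 2) * a ^ 2 := by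
    have := (div_le_iff₀ ha2).mp hmin₂
    linarith
  have hx : 0 < ρ₀ ^ 2 := by positivity
  have hy : 0 < r₀ ^ 2 := by positivity
  have hp : 0 < P 0 := lt_of_lt_of_le (by positivity) hP0l
  have hq : 0 < R 0 := lt_of_lt_of_le (by positivity) hR0l
  have hP' := hP.hasDerivAt
  have hR' := hR.hasDerivAt
  generalize deriv P 0 = s at *
  generalize deriv R 0 = t at *
  generalize ρ₀ ^ 2 = x at *
  generalize r₀ ^ 2 = y at *
  have hxd : HasDerivAt (fun ε : ℝ => x + ε) 1 0 := (hasDerivAt_id (0 : ℝ)).const_add x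
  have hyd : HasDerivAt (fun ε : ℝ => y + ε) 1 0 := (hasDerivAt_id (0 : ℝ)).const_add y
  have hD : 0 < x ^ 2 * R 0 + y ^ 2 * P 0 := by positivity
  have hF := (((hxd.mul hyd).rpow_const (p := ν) (Or.inl (by simp; exact ⟨hx.ne', hy.ne'⟩))).mul
    (hP'.add hR')).div (((hxd.pow 2).mul hR').add ((hyd.pow 2).mul hP')) (by simpa using hD.ne')
  have key : 0 ≤ ν * (x + y) * (P 0 + R 0) * (x ^ 2 * R 0 + y ^ 2 * P 0)
      + x * y * (x ^ 2 - y ^ 2) * (s * R 0 - t * P 0)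
      - 2 * x * y * (P 0 + R 0) * (x * R 0 + y * P 0) := by
    rcases le_total y x with hyx | hxy
    · exact numerator_nonneg_of_le hν₂ hν₁ ha haA h₁ h₂ hy hyx hP0l hP0u hR0l hR0u hP'l hR'u
    · have := numerator_nonneg_of_le hν₂ hν₁ ha haA h₁ h₂ hx hxy hR0l hR0u hP0l hP0u hR'l hP'u
      linarith
  refine le_of_le_of_eq ?_ hF.deriv.symm
  have hpow : (x * y) ^ ν = (x * y) ^ (ν - 1) * (x * y) := by
    rw [Real.rpow_sub_one (by positivity)]
    field_simp
  simp only [Pi.mul_apply, Pi.add_apply, Pi.pow_apply, add_zero]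
  rw [hpow]
  refine div_nonneg ?_ (sq_nonneg _)
  have hfac : 0 ≤ (x * y) ^ (ν - 1) := by positivity
  have := mul_nonneg hfac key
  norm_num
  linarith
end

section
/- Let ζ > 1. Then there exists b₀ ∈ (0,1) such that for every b ∈ (0,b₀) the quartic polynomial q_b(m) := (1−ζ)·b²·m⁴ + (1 + b² − 2ζb)·m² + (1−ζ) takes both strictly positive and strictly negative values as m ranges over ℝ. Consequently, for sufficiently small b > 0, the 2-dimensional anisotropic Morse metric g = (x²+b²y²)(dx²+dy²) − ζ(x dx + b y dy)² admits radial lines γ(s) = (s,ms) that are timelike, radial lines that are null, and radial lines that are spacelike. -/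
/-!
As a polynomial in `m²` the quartic is negative at `m = 0`, since `1 - ζ < 0`. At the balanced
point `m² = 1/b`, where the two extreme terms are equal, it takes the value
`((1 + b)² - 4ζb) / b`, which is positive for `b < 1/(4ζ)`. So `b₀ = 1/(4ζ)` works, and the
intermediate value theorem on `[0, √(1/b)]` gives a zero.
-/

/-- For `ζ > 1` there exists `b₀ ∈ (0,1)` such that for every
`b ∈ (0,b₀)` the quartic `q_b(m) = (1−ζ)b²m⁴ + (1+b²−2ζb)m² + (1−ζ)` takes
both strictly positive and strictly negative values (and hence also vanishes
for some `m`): the anisotropic Morse metric admits spacelike, timelike and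
null radial directions. -/
theorem anisotropic_radial_signs
    (ζ : ℝ) (hζ : 1 < ζ) :
    ∃ b₀ : ℝ, 0 < b₀ ∧ b₀ < 1 ∧ ∀ b : ℝ, 0 < b → b < b₀ →
      (∃ m : ℝ,
        0 < (1 - ζ) * b ^ 2 * m ^ 4 + (1 + b ^ 2 - 2 * ζ * b) * m ^ 2 + (1 - ζ)) ∧
      (∃ m : ℝ,
        (1 - ζ) * b ^ 2 * m ^ 4 + (1 + b ^ 2 - 2 * ζ * b) * m ^ 2 + (1 - ζ) < 0) ∧
      (∃ m : ℝ,
        (1 - ζ) * b ^ 2 * m ^ 4 + (1 + b ^ 2 - 2 * ζ * b) * m ^ 2 + (1 - ζ) = 0) := by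
  have hζ0 : 0 < 4 * ζ := by linarith
  refine ⟨1 / (4 * ζ), by positivity, ?_, ?_⟩
  · rw [div_lt_one hζ0]; linarith
  intro b hb hb0
  rw [lt_div_iff₀ hζ0] at hb0
  set q : ℝ → ℝ := fun m =>
    (1 - ζ) * b ^ 2 * m ^ 4 + (1 + b ^ 2 - 2 * ζ * b) * m ^ 2 + (1 - ζ) with hq
  have hneg : q 0 < 0 := by
    simp only [hq]; norm_num; exact hζ
  have hpos : 0 < q (√(1 / b)) := by
    have h2 : √(1 / b) ^ 2 = 1 / b := Real.sq_sqrt (by positivity)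
    have h4 : √(1 / b) ^ 4 = (1 / b) ^ 2 := by
      rw [show √(1 / b) ^ 4 = (√(1 / b) ^ 2) ^ 2 by ring, h2]
    have hval : q (√(1 / b)) = ((1 + b) ^ 2 - b * (4 * ζ)) / b := by
      simp only [hq, h2, h4]
      field_simp
      ring
    rw [hval]
    exact div_pos (by nlinarith) hb
  have hcont : Continuous q := by fun_prop
  obtain ⟨m, -, hm⟩ := intermediate_value_Icc (Real.sqrt_nonneg (1 / b)) hcont.continuousOn
    ⟨hneg.le, hpos.le⟩
  exact ⟨⟨_, hpos⟩, ⟨_, hneg⟩, ⟨m, hm⟩⟩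
end

section
/- Let γ : [c,d) → B ∖ {0} be a future-directed causal locally Lipschitz curve that is future inextendible in B ∖ {0}, meaning that γ(s) does not converge to a point of B ∖ {0} as s → d⁻. Then for every compact set K ⊆ B ∖ {0} there exists s₀ ∈ [c,d) such that γ(s) ∉ K for all s ∈ (s₀,d). Equivalently, either γ(s) → 0 as s → d⁻, or γ eventually leaves every compact subset of B (it runs into the boundary of the ball). -/
/-!
Along a causal curve `γ` the Morse function `f` is nondecreasing, and the causality inequality
together with `|∇f(x)| ≥ α‖x‖`, `α = minᵢ |aᵢ|`, gives the speed bound `α ‖γ‖ ‖γ'‖ ≤ ζ (f ∘ γ)'`.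
This bound degenerates at the origin, and the weight `‖γ‖` is absorbed by the homeomorphism
`x ↦ ‖x‖ x` of `ℝⁿ`: the curve `Φ = ‖γ‖ γ` satisfies `‖Φ'‖ ≤ 2 ‖γ‖ ‖γ'‖`, hence
`‖Φ(t) - Φ(s)‖ ≤ (2ζ/α) (f(γ(t)) - f(γ(s)))` for all `s ≤ t`, whether or not `γ` comes close to the
origin (`causal_increment_le`).  As `f` is bounded on the ball, `f ∘ γ` converges as `s → d⁻`, so
`Φ` is Cauchy and converges to some `q`.

If `γ` returned to `K` at parameters arbitrarily close to `d`, then `q = ‖k‖ k` for some `k ∈ K`,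
in particular `q ≠ 0`, and inverting `x ↦ ‖x‖ x` gives `γ(s) → k`, which contradicts
inextendibility.
-/

open MeasureTheory Set

noncomputable section

/-- The Morse quadratic form `g_x(V) = (Σᵢ aᵢ²xᵢ²)‖V‖² − ζ(Σₖ aₖxₖVₖ)²`
determined by the Euclidean metric, the Morse function `f(x) = ½Σᵢ aᵢxᵢ²`
and the constant `ζ`. -/
def morseForm (n : ℕ) (a : Fin n → ℝ) (ζ : ℝ)
    (x V : EuclideanSpace ℝ (Fin n)) : ℝ :=
  (∑ i, (a i) ^ 2 * (x i) ^ 2) * ‖V‖ ^ 2 - ζ * (∑ i, a i * x i * V i) ^ 2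

/-- `γ : [c,d] → B` is a future-directed timelike locally Lipschitz curve:
for a.e. `s` with `γ s ≠ 0`, `γ` has a derivative `v` at `s` with
`g_{γ s}(v) < 0` and `Σᵢ aᵢ γᵢ(s) vᵢ > 0`. -/
def FDTimelikeOn (n : ℕ) (a : Fin n → ℝ) (ζ : ℝ)
    (B : Set (EuclideanSpace ℝ (Fin n)))
    (γ : ℝ → EuclideanSpace ℝ (Fin n)) (c d : ℝ) : Prop :=
  c < d ∧ (∀ s ∈ Icc c d, γ s ∈ B) ∧ (∃ K, LipschitzOnWith K γ (Icc c d)) ∧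
    ∀ᵐ s ∂(volume.restrict (Icc c d)), γ s ≠ 0 →
      ∃ v : EuclideanSpace ℝ (Fin n), HasDerivAt γ v s ∧
        morseForm n a ζ (γ s) v < 0 ∧ 0 < ∑ i, a i * γ s i * v i

/-- `γ : [c,d] → B` is a future-directed causal locally Lipschitz curve:
for a.e. `s` with `γ s ≠ 0`, `γ` has a derivative `v ≠ 0` at `s` with
`g_{γ s}(v) ≤ 0` and `Σᵢ aᵢ γᵢ(s) vᵢ > 0`. -/
def FDCausalOn (n : ℕ) (a : Fin n → ℝ) (ζ : ℝ)
    (B : Set (EuclideanSpace ℝ (Fin n)))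
    (γ : ℝ → EuclideanSpace ℝ (Fin n)) (c d : ℝ) : Prop :=
  c < d ∧ (∀ s ∈ Icc c d, γ s ∈ B) ∧ (∃ K, LipschitzOnWith K γ (Icc c d)) ∧
    ∀ᵐ s ∂(volume.restrict (Icc c d)), γ s ≠ 0 →
      ∃ v : EuclideanSpace ℝ (Fin n), HasDerivAt γ v s ∧
        (morseForm n a ζ (γ s) v ≤ 0 ∧ v ≠ 0) ∧ 0 < ∑ i, a i * γ s i * v i

/-- `q ∈ I⁺_𝓜(p)`: chronological relation in `B` (curves may pass through the
degenerate point `0`). -/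
def chronFull (n : ℕ) (a : Fin n → ℝ) (ζ : ℝ) (B : Set (EuclideanSpace ℝ (Fin n)))
    (p q : EuclideanSpace ℝ (Fin n)) : Prop :=
  ∃ γ c d, FDTimelikeOn n a ζ B γ c d ∧ γ c = p ∧ γ d = q

/-- `q ∈ I⁺_M(p)`: chronological relation in the Morse spacetime `B ∖ {0}`
(curves avoid the degenerate point `0`). -/
def chronDot (n : ℕ) (a : Fin n → ℝ) (ζ : ℝ) (B : Set (EuclideanSpace ℝ (Fin n)))
    (p q : EuclideanSpace ℝ (Fin n)) : Prop :=
  ∃ γ c d, FDTimelikeOn n a ζ B γ c d ∧ γ c = p ∧ γ d = q ∧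
    ∀ s ∈ Icc c d, γ s ≠ 0

/-- `q ∈ J⁺_𝓜(p)`: causal relation in `B`, with the convention `p ∈ J⁺_𝓜(p)`. -/
def causalFull (n : ℕ) (a : Fin n → ℝ) (ζ : ℝ) (B : Set (EuclideanSpace ℝ (Fin n)))
    (p q : EuclideanSpace ℝ (Fin n)) : Prop :=
  p = q ∨ ∃ γ c d, FDCausalOn n a ζ B γ c d ∧ γ c = p ∧ γ d = q

/-- `q ∈ J⁺_M(p)`: causal relation in `B ∖ {0}`, with the convention
`p ∈ J⁺_M(p)` for `p ≠ 0`. -/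
def causalDot (n : ℕ) (a : Fin n → ℝ) (ζ : ℝ) (B : Set (EuclideanSpace ℝ (Fin n)))
    (p q : EuclideanSpace ℝ (Fin n)) : Prop :=
  (p = q ∧ p ≠ 0) ∨ ∃ γ c d, FDCausalOn n a ζ B γ c d ∧ γ c = p ∧ γ d = q ∧
    ∀ s ∈ Icc c d, γ s ≠ 0

/-- **Condition O**: for every `q ∈ B` with `0 ∈ I⁺_𝓜(q)` there is a
neighborhood `U ⊆ B` of `0` with `U ∖ {0} ⊆ I⁺_M(q)`, and dually for pasts. -/
def CondO (n : ℕ) (a : Fin n → ℝ) (ζ : ℝ)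
    (B : Set (EuclideanSpace ℝ (Fin n))) : Prop :=
  (∀ q ∈ B, chronFull n a ζ B q 0 →
    ∃ U ∈ nhds (0 : EuclideanSpace ℝ (Fin n)), U ⊆ B ∧
      ∀ x ∈ U, x ≠ 0 → chronDot n a ζ B q x) ∧
  (∀ q ∈ B, chronFull n a ζ B 0 q →
    ∃ U ∈ nhds (0 : EuclideanSpace ℝ (Fin n)), U ⊆ B ∧
      ∀ x ∈ U, x ≠ 0 → chronDot n a ζ B x q)

/-- The Morse function `f(x) = ½ Σᵢ aᵢ xᵢ²`. -/
def morseFun (n : ℕ) (a : Fin n → ℝ) (x : EuclideanSpace ℝ (Fin n)) : ℝ :=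
  (1 / 2) * ∑ i, a i * (x i) ^ 2

lemma contDiff_morseFun (n : ℕ) (a : Fin n → ℝ) : ContDiff ℝ 1 (morseFun n a) := by
  unfold morseFun
  fun_prop

lemma hasDerivAt_morseFun_comp {n : ℕ} (a : Fin n → ℝ) {γ : ℝ → EuclideanSpace ℝ (Fin n)}
    {v : EuclideanSpace ℝ (Fin n)} {s : ℝ} (h : HasDerivAt γ v s) :
    HasDerivAt (fun t => morseFun n a (γ t)) (∑ i, a i * γ s i * v i) s := by
  have hi : ∀ i, HasDerivAt (fun t => γ t i) (v i) s := fun i =>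
    (EuclideanSpace.proj (𝕜 := ℝ) i).hasFDerivAt.comp_hasDerivAt s h
  have h1 : HasDerivAt (fun t => ∑ i, a i * (γ t i) ^ 2)
      (∑ i, a i * (2 * γ s i * v i)) s :=
    HasDerivAt.fun_sum fun i _ => by simpa using ((hi i).fun_pow 2).const_mul (a i)
  have h2 := h1.const_mul (1 / 2)
  refine h2.congr_deriv ?_
  rw [Finset.mul_sum]
  exact Finset.sum_congr rfl fun i _ => by ring

lemma exists_pos_le_sq {n : ℕ} {a : Fin n → ℝ} (ha : ∀ i, a i ≠ 0) :
    ∃ α : ℝ, 0 < α ∧ ∀ i, α ^ 2 ≤ (a i) ^ 2 := by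
  rcases isEmpty_or_nonempty (Fin n) with h | h
  · exact ⟨1, one_pos, fun i => (h.false i).elim⟩
  · obtain ⟨j, hj⟩ := Finite.exists_min fun i => |a i|
    exact ⟨|a j|, abs_pos.2 (ha j), fun i => by
      rw [← sq_abs (a i)]
      exact pow_le_pow_left₀ (abs_nonneg _) (hj i) 2⟩

/-- The speed of a causal vector, weighted by the distance to the critical point, is controlled by
the rate of increase of the Morse function. -/
lemma causal_speed_le {n : ℕ} {a : Fin n → ℝ} {ζ α : ℝ} (hζ : 1 < ζ)
    (hαa : ∀ i, α ^ 2 ≤ (a i) ^ 2) {x v : EuclideanSpace ℝ (Fin n)}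
    (hv : morseForm n a ζ x v ≤ 0) (hF : 0 < ∑ i, a i * x i * v i) :
    α * (‖x‖ * ‖v‖) ≤ ζ * ∑ i, a i * x i * v i := by
  have hS : α ^ 2 * ‖x‖ ^ 2 ≤ ∑ i, (a i) ^ 2 * (x i) ^ 2 := by
    rw [EuclideanSpace.real_norm_sq_eq, Finset.mul_sum]
    exact Finset.sum_le_sum fun i _ => mul_le_mul_of_nonneg_right (hαa i) (sq_nonneg _)
  unfold morseForm at hv
  set F := ∑ i, a i * x i * v i
  have h1 := mul_le_mul_of_nonneg_right hS (sq_nonneg ‖v‖)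
  -- `√ζ ≤ ζ`, so `√ζ` may be replaced by `ζ`
  have h2 : ζ * F ^ 2 ≤ ζ ^ 2 * F ^ 2 :=
    mul_le_mul_of_nonneg_right (by nlinarith) (sq_nonneg _)
  refine le_of_sq_le_sq ?_ (by positivity)
  nlinarith

lemma le_of_ae_hasDerivAt_nonneg {H : ℝ → ℝ} {s t : ℝ} (hst : s ≤ t)
    (hH : AbsolutelyContinuousOnInterval H s t)
    (hd : ∀ᵐ r ∂(volume.restrict (Icc s t)), ∃ H', HasDerivAt H H' r ∧ 0 ≤ H') :
    H s ≤ H t := by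
  rw [← sub_nonneg, ← hH.integral_deriv_eq_sub]
  refine intervalIntegral.integral_nonneg_of_ae_restrict hst ?_
  filter_upwards [hd] with r hr
  obtain ⟨H', h1, h2⟩ := hr
  simpa [h1.deriv] using h2

lemma absolutelyContinuous_morseFun_comp {n : ℕ} (a : Fin n → ℝ) {R : ℝ}
    {γ : ℝ → EuclideanSpace ℝ (Fin n)} {s t : ℝ} (hst : s ≤ t)
    (hball : ∀ r ∈ Icc s t, γ r ∈ Metric.closedBall 0 R)
    {L : NNReal} (hlip : LipschitzOnWith L γ (Icc s t)) :
    AbsolutelyContinuousOnInterval (fun r => morseFun n a (γ r)) s t := by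
  obtain ⟨M, hM⟩ := (contDiff_morseFun n a).contDiffOn.exists_lipschitzOnWith one_ne_zero
    (convex_closedBall (0 : EuclideanSpace ℝ (Fin n)) R) (isCompact_closedBall _ _)
  rw [← uIcc_of_le hst] at hlip hball
  exact (hM.comp hlip hball).absolutelyContinuousOnInterval

lemma hasDerivAt_norm_comp {E : Type*} [NormedAddCommGroup E] [InnerProductSpace ℝ E]
    {γ : ℝ → E} {v : E} {s : ℝ} (h : HasDerivAt γ v s) (h0 : γ s ≠ 0) :
    HasDerivAt (fun t => ‖γ t‖) (inner ℝ (γ s) v / ‖γ s‖) s := by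
  have h1 := h.norm_sq.sqrt (by simpa using h0)
  simp only [Real.sqrt_sq (norm_nonneg _)] at h1
  exact h1.congr_deriv (mul_div_mul_left _ _ two_ne_zero)

lemma causal_morseFun_le {n : ℕ} {a : Fin n → ℝ} {ζ R : ℝ}
    {γ : ℝ → EuclideanSpace ℝ (Fin n)} {s t : ℝ} (hst : s ≤ t)
    (hball : ∀ r ∈ Icc s t, γ r ∈ Metric.closedBall 0 R) (hne : ∀ r ∈ Icc s t, γ r ≠ 0)
    {L : NNReal} (hlip : LipschitzOnWith L γ (Icc s t))
    (hcausal : ∀ᵐ r ∂(volume.restrict (Icc s t)), γ r ≠ 0 →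
      ∃ v : EuclideanSpace ℝ (Fin n), HasDerivAt γ v r ∧
        (morseForm n a ζ (γ r) v ≤ 0 ∧ v ≠ 0) ∧ 0 < ∑ i, a i * γ r i * v i) :
    morseFun n a (γ s) ≤ morseFun n a (γ t) := by
  refine le_of_ae_hasDerivAt_nonneg (H := fun r => morseFun n a (γ r)) hst
    (absolutelyContinuous_morseFun_comp a hst hball hlip) ?_
  filter_upwards [hcausal, ae_restrict_mem measurableSet_Icc] with r hr hrm
  obtain ⟨v, hv, -, hF⟩ := hr (hne r hrm)
  exact ⟨_, hasDerivAt_morseFun_comp a hv, hF.le⟩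

/-- The increment of `‖γ‖ γ` along a causal curve that avoids the origin is controlled by the
increment of the Morse function, with a constant that does not depend on how close the curve comes
to the origin. -/
lemma causal_increment_le {n : ℕ} {a : Fin n → ℝ} {ζ α R : ℝ} (hζ : 1 < ζ) (hα : 0 < α)
    (hαa : ∀ i, α ^ 2 ≤ (a i) ^ 2) {γ : ℝ → EuclideanSpace ℝ (Fin n)} {s t : ℝ} (hst : s ≤ t)
    (hball : ∀ r ∈ Icc s t, γ r ∈ Metric.closedBall 0 R) (hne : ∀ r ∈ Icc s t, γ r ≠ 0)
    {L : NNReal} (hlip : LipschitzOnWith L γ (Icc s t))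
    (hcausal : ∀ᵐ r ∂(volume.restrict (Icc s t)), γ r ≠ 0 →
      ∃ v : EuclideanSpace ℝ (Fin n), HasDerivAt γ v r ∧
        (morseForm n a ζ (γ r) v ≤ 0 ∧ v ≠ 0) ∧ 0 < ∑ i, a i * γ r i * v i) :
    ‖‖γ t‖ • γ t - ‖γ s‖ • γ s‖ ≤
      2 * ζ / α * (morseFun n a (γ t) - morseFun n a (γ s)) := by
  have hmono := causal_morseFun_le hst hball hne hlip hcausal
  have hC : 0 < 2 * ζ / α := by positivity
  set w := ‖γ t‖ • γ t - ‖γ s‖ • γ s with hw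
  rcases eq_or_ne w 0 with h0 | h0
  · rw [h0, norm_zero]
    exact mul_nonneg hC.le (sub_nonneg.2 hmono)
  have hwpos : 0 < ‖w‖ := norm_pos_iff.2 h0
  have hlip' : LipschitzOnWith L γ (uIcc s t) := by rwa [uIcc_of_le hst]
  -- Testing against the fixed vector `w` reduces the claim to the monotonicity of a real function.
  have key : ‖w‖ * (2 * ζ / α) * morseFun n a (γ s) - ‖γ s‖ * inner ℝ w (γ s) ≤
      ‖w‖ * (2 * ζ / α) * morseFun n a (γ t) - ‖γ t‖ * inner ℝ w (γ t) := by
    refine le_of_ae_hasDerivAt_nonneg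
      (H := fun r => ‖w‖ * (2 * ζ / α) * morseFun n a (γ r) - ‖γ r‖ * inner ℝ w (γ r)) hst ?_ ?_
    · exact ((absolutelyContinuous_morseFun_comp a hst hball hlip).const_mul _).sub
        (((lipschitzWith_one_norm.comp_lipschitzOnWith hlip').absolutelyContinuousOnInterval).mul
          (((innerSL ℝ w).lipschitz.comp_lipschitzOnWith hlip').absolutelyContinuousOnInterval))
    · filter_upwards [hcausal, ae_restrict_mem measurableSet_Icc] with r hr hrm
      obtain ⟨v, hv, ⟨hc, -⟩, hF⟩ := hr (hne r hrm)
      have hi : HasDerivAt (fun r => inner ℝ w (γ r)) (inner ℝ w v) r :=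
        (innerSL ℝ w).hasFDerivAt.comp_hasDerivAt r hv
      refine ⟨_, ((hasDerivAt_morseFun_comp a hv).const_mul (‖w‖ * (2 * ζ / α))).sub
        ((hasDerivAt_norm_comp hv (hne r hrm)).mul hi), ?_⟩
      have hγ : 0 < ‖γ r‖ := norm_pos_iff.2 (hne r hrm)
      have h1 : inner ℝ (γ r) v / ‖γ r‖ * inner ℝ w (γ r) ≤ ‖v‖ * (‖w‖ * ‖γ r‖) := by
        refine (le_abs_self _).trans ?_
        rw [abs_mul, abs_div, abs_norm]
        refine mul_le_mul ?_ (abs_real_inner_le_norm _ _) (abs_nonneg _) (norm_nonneg _)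
        rw [div_le_iff₀ hγ, mul_comm]
        exact abs_real_inner_le_norm _ _
      have h2 : ‖γ r‖ * inner ℝ w v ≤ ‖γ r‖ * (‖w‖ * ‖v‖) :=
        mul_le_mul_of_nonneg_left (real_inner_le_norm _ _) hγ.le
      have h3 : ‖γ r‖ * ‖v‖ ≤ ζ / α * ∑ i, a i * γ r i * v i := by
        rw [div_mul_eq_mul_div, le_div_iff₀ hα, mul_comm]
        exact causal_speed_le hζ hαa hc hF
      have h4 := mul_le_mul_of_nonneg_left h3 hwpos.le
      have h5 : ‖w‖ * (2 * ζ / α) * ∑ i, a i * γ r i * v i =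
          2 * (‖w‖ * (ζ / α * ∑ i, a i * γ r i * v i)) := by ring
      rw [h5]
      linarith
  have hself : ‖w‖ * ‖w‖ = ‖γ t‖ * inner ℝ w (γ t) - ‖γ s‖ * inner ℝ w (γ s) := by
    rw [← real_inner_self_eq_norm_mul_norm]
    nth_rewrite 2 [hw]
    rw [inner_sub_right, inner_smul_right, inner_smul_right]
  refine le_of_mul_le_mul_left ?_ hwpos
  rw [hself]
  linarith

/-- `x ↦ ‖x‖ x` is inverted away from the origin by `y ↦ ‖y‖^(-1/2) y`. -/
lemma inv_sqrt_norm_smul {E : Type*} [NormedAddCommGroup E] [NormedSpace ℝ E] {x : E}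
    (hx : x ≠ 0) : (√‖‖x‖ • x‖)⁻¹ • (‖x‖ • x) = x := by
  rw [norm_smul, norm_norm, Real.sqrt_mul_self (norm_nonneg _), smul_smul,
    inv_mul_cancel₀ (norm_ne_zero_iff.2 hx), one_smul]

/-- non-imprisonment near the critical point. Let
`γ : [c,d) → B ∖ {0}` be a future-directed causal locally Lipschitz curve that
is future inextendible in `B ∖ {0}` (it does not converge to a point of
`B ∖ {0}` as `s → d⁻`).  Then `γ` eventually leaves every compact subset
`K ⊆ B ∖ {0}`. -/
theorem causal_curve_leaves_compacts
    (n : ℕ) (hn : 2 ≤ n) (a : Fin n → ℝ) (ha : ∀ i, a i ≠ 0)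
    (ζ : ℝ) (hζ : 1 < ζ) (R : ℝ) (hR : 0 < R)
    (B : Set (EuclideanSpace ℝ (Fin n))) (hB : B = Metric.ball 0 R)
    (γ : ℝ → EuclideanSpace ℝ (Fin n)) (c d : ℝ) (hcd : c < d)
    (hmaps : ∀ s ∈ Ico c d, γ s ∈ B ∧ γ s ≠ 0)
    (hlip : ∀ e ∈ Ico c d, ∃ K, LipschitzOnWith K γ (Icc c e))
    (hcausal : ∀ᵐ s ∂(volume.restrict (Ico c d)), γ s ≠ 0 →
      ∃ v : EuclideanSpace ℝ (Fin n), HasDerivAt γ v s ∧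
        (morseForm n a ζ (γ s) v ≤ 0 ∧ v ≠ 0) ∧ 0 < ∑ i, a i * γ s i * v i)
    (hinext : ¬ ∃ p ∈ B, p ≠ (0 : EuclideanSpace ℝ (Fin n)) ∧
      Filter.Tendsto γ (nhdsWithin d (Iio d)) (nhds p)) :
    ∀ K : Set (EuclideanSpace ℝ (Fin n)), IsCompact K →
      K ⊆ B \ {(0 : EuclideanSpace ℝ (Fin n))} →
      ∃ s₀ ∈ Ico c d, ∀ s ∈ Ioo s₀ d, γ s ∉ K := by
  intro K hK hKB
  obtain ⟨α, hα, hαa⟩ := exists_pos_le_sq ha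
  have hball : ∀ s ∈ Ico c d, γ s ∈ Metric.closedBall 0 R := fun s hs =>
    Metric.ball_subset_closedBall (hB ▸ (hmaps s hs).1)
  have hsub : ∀ {s t}, s ∈ Ico c d → t ∈ Ico c d → Icc s t ⊆ Ico c d := fun hs ht r hr =>
    ⟨hs.1.trans hr.1, hr.2.trans_lt ht.2⟩
  have hmono : MonotoneOn (fun s => morseFun n a (γ s)) (Ico c d) := by
    intro s hs t ht hst
    obtain ⟨L, hL⟩ := hlip t ht
    exact causal_morseFun_le hst (fun r hr => hball r (hsub hs ht hr))
      (fun r hr => (hmaps r (hsub hs ht hr)).2) (hL.mono (Icc_subset_Icc_left hs.1))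
      (ae_restrict_of_ae_restrict_of_subset (hsub hs ht) hcausal)
  have hinc : ∀ s ∈ Ico c d, ∀ t ∈ Ico c d, s ≤ t → ‖‖γ t‖ • γ t - ‖γ s‖ • γ s‖ ≤
      2 * ζ / α * (morseFun n a (γ t) - morseFun n a (γ s)) := by
    intro s hs t ht hst
    obtain ⟨L, hL⟩ := hlip t ht
    exact causal_increment_le hζ hα hαa hst (fun r hr => hball r (hsub hs ht hr))
      (fun r hr => (hmaps r (hsub hs ht hr)).2) (hL.mono (Icc_subset_Icc_left hs.1))
      (ae_restrict_of_ae_restrict_of_subset (hsub hs ht) hcausal)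
  have hC : 0 < 2 * ζ / α := by positivity
  have hdist : ∀ s ∈ Ico c d, ∀ t ∈ Ico c d, dist (‖γ s‖ • γ s) (‖γ t‖ • γ t) ≤
      2 * ζ / α * dist (morseFun n a (γ s)) (morseFun n a (γ t)) := by
    have aux : ∀ s ∈ Ico c d, ∀ t ∈ Ico c d, s ≤ t → dist (‖γ t‖ • γ t) (‖γ s‖ • γ s) ≤
        2 * ζ / α * dist (morseFun n a (γ t)) (morseFun n a (γ s)) := by
      intro s hs t ht hst
      rw [dist_eq_norm, Real.dist_eq]
      exact (hinc s hs t ht hst).trans (mul_le_mul_of_nonneg_left (le_abs_self _) hC.le)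
    intro s hs t ht
    rcases le_total s t with h | h
    · rw [dist_comm, dist_comm (morseFun n a (γ s))]
      exact aux s hs t ht h
    · exact aux t ht s hs h
  have hIco : Ico c d ∈ nhdsWithin d (Iio d) := Ico_mem_nhdsLT hcd
  have hbdd : BddAbove ((fun s => morseFun n a (γ s)) '' Ioo c d) := by
    refine ((isCompact_closedBall (0 : EuclideanSpace ℝ (Fin n)) R).image
      (contDiff_morseFun n a).continuous).bddAbove.mono ?_
    rintro _ ⟨s, hs, rfl⟩
    exact ⟨γ s, hball s (Ioo_subset_Ico_self hs), rfl⟩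
  have hf := (hmono.mono Ioo_subset_Ico_self).tendsto_nhdsWithin_Ioo_left (nonempty_Ioo.2 hcd) hbdd
  obtain ⟨q, hq⟩ : ∃ q, Filter.Tendsto (fun s => ‖γ s‖ • γ s) (nhdsWithin d (Iio d)) (nhds q) := by
    rw [← cauchy_map_iff_exists_tendsto, Metric.cauchy_iff]
    refine ⟨inferInstance, fun ε hε => ?_⟩
    obtain ⟨T, hT, hTε⟩ := (Metric.cauchy_iff.1 hf.cauchy_map).2 (ε / (2 * ζ / α)) (by positivity)
    refine ⟨_, Filter.image_mem_map (Filter.inter_mem hIco (Filter.mem_map.1 hT)), ?_⟩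
    rintro _ ⟨s, ⟨hs, hsT⟩, rfl⟩ _ ⟨t, ⟨ht, htT⟩, rfl⟩
    refine (hdist s hs t ht).trans_lt ?_
    have := hTε _ hsT _ htT
    rwa [lt_div_iff₀' hC] at this
  by_contra! hcon
  have hfreq : ∃ᶠ s in nhdsWithin d (Iio d), γ s ∈ K := by
    intro hev
    obtain ⟨l, hl, hlK⟩ := (mem_nhdsLT_iff_exists_Ioo_subset' hcd).1 hev
    obtain ⟨s, hs, hsK⟩ := hcon (max c l) ⟨le_max_left _ _, max_lt hcd hl⟩
    exact hlK ⟨(le_max_right _ _).trans_lt hs.1, hs.2⟩ hsK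
  have hΦK : IsClosed ((fun x : EuclideanSpace ℝ (Fin n) => ‖x‖ • x) '' K) :=
    (hK.image (by fun_prop)).isClosed
  obtain ⟨k, hk, rfl⟩ := hΦK.mem_of_frequently_of_tendsto
    (hfreq.mono fun s hs => mem_image_of_mem _ hs) hq
  have hk0 : k ≠ 0 := (hKB hk).2
  refine hinext ⟨k, (hKB hk).1, hk0, ?_⟩
  have hlim := ((hq.norm.sqrt).inv₀ (by simpa [Real.sqrt_eq_zero'] using hk0)).smul hq
  rw [inv_sqrt_norm_smul hk0] at hlim
  refine hlim.congr' ?_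
  filter_upwards [hIco] with s hs
  exact inv_sqrt_norm_smul (hmaps s hs).2

end
end

section
/- Assume the index condition and the anisotropy bounds. Let q ∈ B ∖ {0} with 0 ∈ I⁺_𝓜(q) (i.e., q lies in the chronological past of the critical point). Then there exists a point q̃ ∈ J⁺_M(q) such that q̃ᵢ = 0 for all i > λ and q̃ ≠ 0 (equivalently, in the radial coordinates r² := −(1/2)Σ_{i≤λ} aᵢxᵢ² and ρ² := (1/2)Σ_{i>λ} aᵢxᵢ², one has ρ(q̃) = 0 and r(q̃) > 0, hence f(q̃) < 0). -/
/-!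
Write `A = diag a`, so that `∇f(x) = A x`, let `J` be `-1` on the unstable and `+1` on the stable
coordinates, and put `k = ζ^(-1/2)`. A vector `V` at `x` is future causal when
`k ‖A x‖ ‖V‖ ≤ ⟪A x, V⟫`. The argument takes place in this coordinate-free setting (`SplitForm`).

Call *radial cone* the set of points `x` where the inward direction `-x` is timelike, that is
`k ‖A x‖ ‖x‖ < -⟪A x, x⟫`. From a point of the radial cone, the segment to a small multiple of its
unstable part is timelike (`SplitForm.exists_line`), so it is enough to reach the radial cone.

Let `γ` be a timelike curve from `q`, cut at its first zero; `f ≤ 0` along it. If it meets the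
radial cone, the claim follows. If it does not, the depth `-⟪A x, x⟫ / ‖x‖²` is nonincreasing along
`γ`, and it decreases at a definite rate wherever the stable part of `γ` grows
(`SplitForm.decay_strong`). Deform `γ` by `x ↦ x - η exp (M * depth x) • J x`, which enlarges the
unstable and shrinks the stable part. Where the stable part of `γ` decreases, this preserves
causality by itself; where it grows, the decay of the depth contributes a timelike velocity along
`J x` that compensates for the loss when `M` is large (`SplitForm.push_causal`,
`SplitForm.push_velocity`). Since `γ` is strictly timelike at some point, the deformed curve can be
entered from `γ` by a short segment when `η` is small (`SplitForm.exists_step`). Finally, since `γ`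
tends to the critical point, it comes arbitrarily close to the radial cone
(`SplitForm.exists_near_cone`), and then the deformed curve lies inside it
(`SplitForm.push_enters`).
-/


open MeasureTheory Set

noncomputable section

/-! ### Pointwise estimates -/

section Abstract

open RealInnerProductSpace

variable {E : Type*} [NormedAddCommGroup E] [InnerProductSpace ℝ E]

/-- The linear algebra behind the Morse form: `A` is symmetric (it plays the role of the Hessian
of `f`, so `∇f(x) = A x`), `J` is a symmetric involution commuting with `A` (`-1` on the unstable
plane, `+1` on the stable one) and `A ∘ J = |A|` is positive definite. The number `k` is the
aperture of the light cones: `V` is future causal at `x` when `k ‖A x‖ ‖V‖ ≤ ⟪A x, V⟫`. The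
constant `K` bounds the anisotropy of `|A|`, and `k * K < 1` says that it is small compared with
the aperture. -/
structure SplitForm (A J : E →L[ℝ] E) (μ K k : ℝ) : Prop where
  symmA : ∀ x y, ⟪A x, y⟫ = ⟪x, A y⟫
  symmJ : ∀ x y, ⟪J x, y⟫ = ⟪x, J y⟫
  invol : ∀ x, J (J x) = x
  comm : ∀ x, A (J x) = J (A x)
  mu_pos : 0 < μ
  k_pos : 0 < k
  K_pos : 0 < K
  kK_lt : k * K < 1
  lower : ∀ x, μ * ‖x‖ ^ 2 ≤ ⟪A (J x), x⟫
  upper : ∀ x, ‖A x‖ * ‖x‖ ≤ K * ⟪A (J x), x⟫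

namespace SplitForm

variable {A J : E →L[ℝ] E} {μ K k : ℝ}

lemma norm_J (h : SplitForm A J μ K k) (x : E) : ‖J x‖ = ‖x‖ := by
  have h1 : ‖J x‖ ^ 2 = ‖x‖ ^ 2 := by
    rw [← real_inner_self_eq_norm_sq, ← real_inner_self_eq_norm_sq, h.symmJ, h.invol]
  exact (pow_left_inj₀ (norm_nonneg _) (norm_nonneg _) two_ne_zero).1 h1

lemma inner_A_J (h : SplitForm A J μ K k) (x y : E) :
    ⟪A x, J y⟫ = ⟪A (J x), y⟫ := by
  rw [h.comm, h.symmJ]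

lemma form_pos (h : SplitForm A J μ K k) {x : E} (hx : x ≠ 0) : 0 < ⟪A (J x), x⟫ :=
  lt_of_lt_of_le (mul_pos h.mu_pos (pow_pos (norm_pos_iff.2 hx) 2)) (h.lower x)

lemma form_nonneg (h : SplitForm A J μ K k) (x : E) : 0 ≤ ⟪A (J x), x⟫ :=
  le_trans (mul_nonneg h.mu_pos.le (sq_nonneg _)) (h.lower x)

lemma neg_form_le (h : SplitForm A J μ K k) (x : E) : -⟪A x, x⟫ ≤ ⟪A (J x), x⟫ := by
  have h1 := h.form_nonneg (x + J x)
  have e1 : ⟪A (J (x + J x)), x + J x⟫ = 2 * ⟪A (J x), x⟫ + 2 * ⟪A x, x⟫ := by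
    simp only [map_add, inner_add_left, inner_add_right, h.invol, h.inner_A_J]
    ring
  linarith

lemma form_le (h : SplitForm A J μ K k) (x : E) : ⟪A x, x⟫ ≤ ⟪A (J x), x⟫ := by
  have h1 := h.form_nonneg (x - J x)
  have e1 : ⟪A (J (x - J x)), x - J x⟫ = 2 * ⟪A (J x), x⟫ - 2 * ⟪A x, x⟫ := by
    simp only [map_sub, inner_sub_left, inner_sub_right, h.invol, h.inner_A_J]
    ring
  linarith

lemma norm_add_smul_J_le (h : SplitForm A J μ K k) (b c : ℝ) (x : E) :
    ‖b • x + c • J x‖ ≤ (|b| + |c|) * ‖x‖ := by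
  refine (norm_add_le _ _).trans ?_
  rw [norm_smul, norm_smul, h.norm_J, Real.norm_eq_abs, Real.norm_eq_abs]
  linarith

lemma norm_sub_smul_J_le (h : SplitForm A J μ K k) {ε : ℝ} (hε : 0 ≤ ε) (x : E) :
    ‖x - ε • J x‖ ≤ (1 + ε) * ‖x‖ := by
  refine (norm_sub_le _ _).trans ?_
  rw [norm_smul, h.norm_J, Real.norm_eq_abs, abs_of_nonneg hε]
  linarith

lemma norm_A_sub_smul_J_le (h : SplitForm A J μ K k) {ε : ℝ} (hε : 0 ≤ ε) (x : E) :
    ‖A (x - ε • J x)‖ ≤ (1 + ε) * ‖A x‖ := by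
  rw [map_sub, map_smul, h.comm]
  exact h.norm_sub_smul_J_le hε _

lemma one_le_K (h : SplitForm A J μ K k) {x : E} (hx : x ≠ 0) : 1 ≤ K := by
  have h1 : ⟪A (J x), x⟫ ≤ ‖A x‖ * ‖x‖ := by
    refine (real_inner_le_norm _ _).trans (le_of_eq ?_)
    rw [h.comm, h.norm_J]
  have h2 := h.upper x
  have h3 := h.form_pos hx
  by_contra hK
  push Not at hK
  nlinarith

/-- Outside the radial cone and where `f ≤ 0`, `-⟪A x, x⟫ / ‖x‖²` does not increase in
causal directions: the right-hand side is, up to a positive factor, minus its derivative along `V`. -/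
lemma decay_nonneg (h : SplitForm A J μ K k) {x V : E}
    (hn0 : 0 ≤ -⟪A x, x⟫) (hn : -⟪A x, x⟫ ≤ k * ‖A x‖ * ‖x‖)
    (hV : k * ‖A x‖ * ‖V‖ ≤ ⟪A x, V⟫) :
    0 ≤ ⟪A x, V⟫ * ‖x‖ ^ 2 + (-⟪A x, x⟫) * ⟪x, V⟫ := by
  have hk := h.k_pos
  have e1 := abs_le.1 (abs_real_inner_le_norm x V)
  have hp : 0 ≤ ⟪A x, V⟫ := le_trans (by positivity) hV
  rcases le_total 0 ⟪x, V⟫ with he | he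
  · positivity
  · have h1 : k * ‖A x‖ * ‖V‖ * ‖x‖ ^ 2 ≤ ⟪A x, V⟫ * ‖x‖ ^ 2 := by gcongr
    have h2 : (k * ‖A x‖ * ‖x‖) * ⟪x, V⟫ ≤ (-⟪A x, x⟫) * ⟪x, V⟫ :=
      mul_le_mul_of_nonpos_right hn he
    have h3 : 0 ≤ (k * ‖A x‖ * ‖x‖) * (‖x‖ * ‖V‖ + ⟪x, V⟫) :=
      mul_nonneg (by positivity) (by linarith)
    nlinarith

/-- The rate in `decay_strong`, a fraction of the conformal length `k ‖A x‖ ‖V‖`. -/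
def rate (K k : ℝ) : ℝ := ((1 - k * K) / (2 * K)) ^ 2 / 2

lemma rate_pos (h : SplitForm A J μ K k) : 0 < rate K k := by
  have h1 := h.kK_lt
  have h2 := h.K_pos
  have : 0 < (1 - k * K) / (2 * K) := div_pos (by linarith) (by linarith)
  unfold rate; positivity

/-- If moreover `V` increases the stable part of `x` (this is `hZ`), then `V` makes an angle
bounded away from zero with the inward radial direction `-x`, so the decay of `decay_nonneg` is
quantitative. -/
lemma decay_strong (h : SplitForm A J μ K k) {x V : E} (hx : x ≠ 0)
    (hn0 : 0 ≤ -⟪A x, x⟫) (hn : -⟪A x, x⟫ ≤ k * ‖A x‖ * ‖x‖)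
    (hV : k * ‖A x‖ * ‖V‖ ≤ ⟪A x, V⟫) (hZ : 0 < ⟪A x, V⟫ + ⟪A (J x), V⟫) :
    rate K k * k * ‖A x‖ * ‖V‖ * ‖x‖ ^ 2 ≤
      ⟪A x, V⟫ * ‖x‖ ^ 2 + (-⟪A x, x⟫) * ⟪x, V⟫ := by
  have hk := h.k_pos
  have hkK := h.kK_lt
  have hK1 := h.one_le_K hx
  have hc := h.rate_pos
  have hX : 0 < ‖x‖ := norm_pos_iff.2 hx
  have hS := h.form_pos hx
  have hkK0 : 0 < k * K := mul_pos hk h.K_pos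
  set t := (1 - k * K) / (2 * K) with ht
  have ht0 : 0 < t := div_pos (by linarith) (by linarith)
  have hc2 : t ^ 2 = 2 * rate K k := by simp only [rate]; ring
  have ht1 : t ≤ 1 := by rw [ht, div_le_one (by linarith)]; linarith
  have hc1 : rate K k ≤ 1 := by nlinarith
  have h1 : k * ‖A x‖ * ‖V‖ * ‖x‖ ^ 2 ≤ ⟪A x, V⟫ * ‖x‖ ^ 2 := by gcongr
  have hp : 0 ≤ ⟪A x, V⟫ := le_trans (by positivity) hV
  have h0 : 0 ≤ k * ‖A x‖ * ‖V‖ * ‖x‖ ^ 2 := by positivity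
  rcases le_total 0 ⟪x, V⟫ with he | he
  · have := mul_nonneg hn0 he
    nlinarith
  · -- the vector `‖x‖ V + ‖V‖ x` measures how far `V` is from the inward radial direction
    have hW : ‖‖x‖ • V + ‖V‖ • x‖ ^ 2 = 2 * (‖x‖ * ‖V‖) * (‖x‖ * ‖V‖ + ⟪x, V⟫) := by
      rw [norm_add_sq_real, norm_smul, norm_smul, inner_smul_left, inner_smul_right,
        real_inner_comm V x]
      simp
      ring
    have hcs : ⟪A x + A (J x), ‖x‖ • V + ‖V‖ • x⟫ ≤ 2 * ‖A x‖ * ‖‖x‖ • V + ‖V‖ • x‖ := by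
      refine (real_inner_le_norm _ _).trans ?_
      gcongr
      refine (norm_add_le _ _).trans (le_of_eq ?_)
      rw [h.comm, h.norm_J]; ring
    have hexp : ⟪A x + A (J x), ‖x‖ • V + ‖V‖ • x⟫ =
        ‖x‖ * (⟪A x, V⟫ + ⟪A (J x), V⟫) + ‖V‖ * (⟪A (J x), x⟫ + ⟪A x, x⟫) := by
      simp only [inner_add_left, inner_add_right, inner_smul_right]; ring
    have hup := h.upper x
    set W := ‖‖x‖ • V + ‖V‖ • x‖ with hWdef
    have hW0 : 0 ≤ W := norm_nonneg _
    set S := ⟪A (J x), x⟫ with hSdef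
    have hzz : (1 - k * K) * S ≤ S + ⟪A x, x⟫ := by nlinarith
    have hZ' : 0 ≤ ‖x‖ * (⟪A x, V⟫ + ⟪A (J x), V⟫) := by positivity
    have h4 : ‖V‖ * ((1 - k * K) * S) ≤ 2 * ‖A x‖ * W := by
      have := mul_le_mul_of_nonneg_left hzz (norm_nonneg V)
      linarith
    have h5 : (‖x‖ * ‖V‖ * (1 - k * K)) * S ≤ (2 * K * W) * S := by
      have a1 := mul_le_mul_of_nonneg_left h4 hX.le
      have a2 := mul_le_mul_of_nonneg_right hup hW0
      nlinarith
    have h6 : ‖x‖ * ‖V‖ * (1 - k * K) ≤ 2 * K * W := le_of_mul_le_mul_right h5 hS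
    have h7 : t * (‖x‖ * ‖V‖) ≤ W := by
      rw [ht, div_mul_eq_mul_div, div_le_iff₀ (by linarith)]; linarith
    have h8 : rate K k * (‖x‖ * ‖V‖) ≤ ‖x‖ * ‖V‖ + ⟪x, V⟫ := by
      rcases (norm_nonneg V).eq_or_lt with hv | hv
      · have : V = 0 := norm_eq_zero.1 hv.symm
        simp [this]
      · have hm : 0 < ‖x‖ * ‖V‖ := mul_pos hX hv
        have h9 : (t * (‖x‖ * ‖V‖)) ^ 2 ≤ W ^ 2 := pow_le_pow_left₀ (by positivity) h7 2
        rw [hW, mul_pow, hc2] at h9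
        have : (2 * (‖x‖ * ‖V‖)) * (rate K k * (‖x‖ * ‖V‖)) ≤
          (2 * (‖x‖ * ‖V‖)) * (‖x‖ * ‖V‖ + ⟪x, V⟫) := by nlinarith
        exact le_of_mul_le_mul_left this (by positivity)
    have h2 : (k * ‖A x‖ * ‖x‖) * ⟪x, V⟫ ≤ (-⟪A x, x⟫) * ⟪x, V⟫ :=
      mul_le_mul_of_nonpos_right hn he
    have h3 := mul_le_mul_of_nonneg_left h8
      (show 0 ≤ k * ‖A x‖ * ‖x‖ by positivity)
    nlinarith

/-- The map `x ↦ x - ε • J x` enlarges the unstable part of `x` and shrinks its stable part. It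
keeps `V` causal unless `V` increases the stable part; in that case a large enough additional
velocity `g • J x`, which is itself future timelike, makes up for the loss. -/
lemma push_causal (h : SplitForm A J μ K k) {x V : E} {ε g : ℝ}
    (hε0 : 0 ≤ ε) (hε : ε ≤ (1 - k * K) / 4) (hg : 0 ≤ g)
    (hn0 : 0 ≤ -⟪A x, x⟫)
    (hV : k * ‖A x‖ * ‖V‖ ≤ ⟪A x, V⟫) (hV0 : 0 < ⟪A x, V⟫)
    (hZ : 0 < ⟪A x, V⟫ + ⟪A (J x), V⟫ →
      4 * ε * (⟪A x, V⟫ + ⟪A (J x), V⟫) ≤ g * ((1 - k * K) * ⟪A (J x), x⟫)) :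
    k * ‖A (x - ε • J x)‖ * ‖V - ε • J V + g • J x‖ ≤
        ⟪A (x - ε • J x), V - ε • J V + g • J x⟫ ∧
      0 < ⟪A (x - ε • J x), V - ε • J V + g • J x⟫ := by
  have hk := h.k_pos
  have hkK := h.kK_lt
  have hS := h.form_nonneg x
  have hup := h.upper x
  have hkK0 : 0 < k * K := mul_pos hk h.K_pos
  have hA := h.norm_A_sub_smul_J_le hε0 x
  have hV1 := h.norm_sub_smul_J_le hε0 V
  have hexp : ⟪A (x - ε • J x), V - ε • J V + g • J x⟫ =
      ((1 + ε) ^ 2 * ⟪A x, V⟫ - 2 * ε * (⟪A x, V⟫ + ⟪A (J x), V⟫)) +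
        g * (⟪A (J x), x⟫ + ε * (-⟪A x, x⟫)) := by
    simp only [map_sub, map_smul, inner_add_right, inner_sub_right, inner_sub_left,
      inner_smul_left, inner_smul_right, h.inner_A_J, h.invol]
    simp
    ring
  rw [hexp]
  have hnorm : ‖V - ε • J V + g • J x‖ ≤ (1 + ε) * ‖V‖ + g * ‖x‖ := by
    refine (norm_add_le _ _).trans ?_
    rw [norm_smul, h.norm_J, Real.norm_eq_abs, abs_of_nonneg hg]
    linarith
  have hbound : k * ‖A (x - ε • J x)‖ * ‖V - ε • J V + g • J x‖ ≤
      (1 + ε) ^ 2 * (k * ‖A x‖ * ‖V‖) + g * ((1 + ε) * (k * K) * ⟪A (J x), x⟫) := by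
    calc k * ‖A (x - ε • J x)‖ * ‖V - ε • J V + g • J x‖
        ≤ k * ((1 + ε) * ‖A x‖) * ((1 + ε) * ‖V‖ + g * ‖x‖) := by gcongr
      _ = (1 + ε) ^ 2 * (k * ‖A x‖ * ‖V‖) + g * ((1 + ε) * k * (‖A x‖ * ‖x‖)) := by ring
      _ ≤ (1 + ε) ^ 2 * (k * ‖A x‖ * ‖V‖) + g * ((1 + ε) * k * (K * ⟪A (J x), x⟫)) := by
          gcongr
      _ = _ := by ring
  have hV2 : (1 + ε) ^ 2 * (k * ‖A x‖ * ‖V‖) ≤ (1 + ε) ^ 2 * ⟪A x, V⟫ := by gcongr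
  have hgain : (1 + ε) * (k * K) * ⟪A (J x), x⟫ + (1 - k * K) / 2 * ⟪A (J x), x⟫ ≤
      ⟪A (J x), x⟫ := by
    have : (1 + ε) * (k * K) + (1 - k * K) / 2 ≤ 1 := by nlinarith
    nlinarith
  have hgain' := mul_le_mul_of_nonneg_left hgain hg
  have hdef : 2 * ε * (⟪A x, V⟫ + ⟪A (J x), V⟫) ≤
      g * ((1 - k * K) / 2 * ⟪A (J x), x⟫) := by
    rcases le_or_gt (⟪A x, V⟫ + ⟪A (J x), V⟫) 0 with hz | hz
    · have : 0 ≤ g * ((1 - k * K) / 2 * ⟪A (J x), x⟫) :=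
        mul_nonneg hg (mul_nonneg (by linarith) hS)
      nlinarith
    · have := hZ hz
      linarith
  have hn1 : 0 ≤ g * (ε * (-⟪A x, x⟫)) := by positivity
  have hpos : 0 < (1 + ε) ^ 2 * ⟪A x, V⟫ := by positivity
  have hgS : 0 ≤ g * ((1 + ε) * (k * K) * ⟪A (J x), x⟫) := by positivity
  constructor <;> nlinarith

/-- A point that misses the radial cone by little enough is moved into it by `x ↦ x - ε • J x`. -/
lemma push_enters (h : SplitForm A J μ K k) {x : E} (hx : x ≠ 0) {ε δ : ℝ}
    (hε0 : 0 ≤ ε) (hε : ε ≤ 1 / 4) (hδ0 : 0 ≤ δ) (hδ : δ * K < ε * (1 - k * K))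
    (hn : -⟪A x, x⟫ ≤ k * ‖A x‖ * ‖x‖)
    (hn' : (k - δ) * (‖A x‖ * ‖x‖) ≤ -⟪A x, x⟫) :
    k * ‖A (x - ε • J x)‖ * ‖x - ε • J x‖ < -⟪A (x - ε • J x), x - ε • J x⟫ := by
  have hk := h.k_pos
  have hS := h.form_pos hx
  have hup := h.upper x
  have hexp : -⟪A (x - ε • J x), x - ε • J x⟫ =
      (1 + ε) ^ 2 * (-⟪A x, x⟫) + 2 * ε * (⟪A (J x), x⟫ + ⟪A x, x⟫) := by
    simp only [map_sub, map_smul, inner_sub_right, inner_sub_left,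
      inner_smul_left, inner_smul_right, h.inner_A_J, h.invol]
    simp
    ring
  have hA := h.norm_A_sub_smul_J_le hε0 x
  have hV1 := h.norm_sub_smul_J_le hε0 x
  have hb : k * ‖A (x - ε • J x)‖ * ‖x - ε • J x‖ ≤ (1 + ε) ^ 2 * (k * (‖A x‖ * ‖x‖)) := by
    calc _ ≤ k * ((1 + ε) * ‖A x‖) * ((1 + ε) * ‖x‖) := by gcongr
      _ = _ := by ring
  rw [hexp]
  have hzz : (1 - k * K) * ⟪A (J x), x⟫ ≤ ⟪A (J x), x⟫ + ⟪A x, x⟫ := by nlinarith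
  have h1 : (1 + ε) ^ 2 * ((k - δ) * (‖A x‖ * ‖x‖)) ≤ (1 + ε) ^ 2 * (-⟪A x, x⟫) := by gcongr
  have h2 : (1 + ε) ^ 2 * (δ * (‖A x‖ * ‖x‖)) ≤ 2 * (δ * (K * ⟪A (J x), x⟫)) := by
    have : (1 + ε) ^ 2 ≤ 2 := by nlinarith
    gcongr
  have h3 : 2 * ε * ((1 - k * K) * ⟪A (J x), x⟫) ≤ 2 * ε * (⟪A (J x), x⟫ + ⟪A x, x⟫) := by
    gcongr
  have h4 := mul_lt_mul_of_pos_right hδ hS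
  nlinarith

/-- For `x` in the radial cone, the segment from `x` to a small multiple of its unstable part
`(x - J x) / 2` is timelike. -/
lemma exists_line (h : SplitForm A J μ K k) {x : E}
    (hx : k * ‖A x‖ * ‖x‖ < -⟪A x, x⟫) :
    ∃ e : ℝ, 0 < e ∧ e < 1 ∧ ∀ t ∈ Icc (0 : ℝ) 1,
      k * ‖A (x + t • (-x + (e / 2) • (x - J x)))‖ * ‖-x + (e / 2) • (x - J x)‖ <
        ⟪A (x + t • (-x + (e / 2) • (x - J x))), -x + (e / 2) • (x - J x)⟫ := by
  have hk := h.k_pos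
  have hS := h.form_nonneg x
  have h1 := h.form_le x
  have h2 := h.neg_form_le x
  have hnorm0 : 0 ≤ k * ‖A x‖ * ‖x‖ := by positivity
  -- the slack of `x` in the radial cone bounds the admissible slow-down of the `y`-part
  obtain ⟨e, he0, he1, he2⟩ : ∃ e : ℝ, 0 < e ∧ e < 1 ∧
      e * ⟪A (J x), x⟫ < -⟪A x, x⟫ - k * ‖A x‖ * ‖x‖ := by
    set w := -⟪A x, x⟫ - k * ‖A x‖ * ‖x‖ with hw
    have hw0 : 0 < w := by linarith
    refine ⟨w / (2 * ⟪A (J x), x⟫), div_pos hw0 (by linarith), ?_, ?_⟩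
    · rw [div_lt_one (by linarith)]; linarith
    · have : 0 < ⟪A (J x), x⟫ := by linarith
      field_simp; linarith
  refine ⟨e, he0, he1, fun t ht => ?_⟩
  obtain ⟨ht0, ht1⟩ := ht
  have hb : 0 < 1 - t * (1 - e) := by nlinarith
  have e1 : x + t • (-x + (e / 2) • (x - J x)) =
      (1 - t + t * e / 2) • x + (-(t * e / 2)) • J x := by module
  have e2 : -x + (e / 2) • (x - J x) = (-(1 - e / 2)) • x + (-(e / 2)) • J x := by module
  have hn2 : ‖-x + (e / 2) • (x - J x)‖ ≤ ‖x‖ := by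
    rw [e2]
    refine (h.norm_add_smul_J_le _ _ _).trans (le_of_eq ?_)
    rw [abs_neg, abs_neg, abs_of_pos (by linarith : 0 < 1 - e / 2), abs_of_pos (by linarith)]
    ring
  have hn1 : ‖A (x + t • (-x + (e / 2) • (x - J x)))‖ ≤ (1 - t * (1 - e)) * ‖A x‖ := by
    rw [e1, map_add, map_smul, map_smul, h.comm]
    refine (h.norm_add_smul_J_le _ _ _).trans (le_of_eq ?_)
    have : 0 ≤ t * e / 2 := by positivity
    rw [abs_neg, abs_of_nonneg this, abs_of_nonneg (by linarith)]
    ring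
  have hexp : ⟪A (x + t • (-x + (e / 2) • (x - J x))), -x + (e / 2) • (x - J x)⟫ =
      (1 - t * (1 - e)) * (1 - e) * ((⟪A (J x), x⟫ - ⟪A x, x⟫) / 2)
        - (1 - t) * ((⟪A (J x), x⟫ + ⟪A x, x⟫) / 2) := by
    rw [e1, e2]
    simp only [map_add, map_smul, inner_add_right, inner_add_left,
      inner_smul_left, inner_smul_right, h.inner_A_J, h.invol]
    simp
    ring
  rw [hexp]
  calc _ ≤ k * ((1 - t * (1 - e)) * ‖A x‖) * ‖x‖ := by gcongr
    _ = (1 - t * (1 - e)) * (k * ‖A x‖ * ‖x‖) := by ring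
    _ < (1 - t * (1 - e)) * (-⟪A x, x⟫ - e * ⟪A (J x), x⟫) := by
        apply mul_lt_mul_of_pos_left _ hb; linarith
    _ ≤ (1 - t * (1 - e)) * ((1 - e) * ((⟪A (J x), x⟫ - ⟪A x, x⟫) / 2)
        - ((⟪A (J x), x⟫ + ⟪A x, x⟫) / 2)) := by
        refine mul_le_mul_of_nonneg_left ?_ hb.le
        nlinarith
    _ ≤ _ := by
        have : (1 - t) * ((⟪A (J x), x⟫ + ⟪A x, x⟫) / 2) ≤
          (1 - t * (1 - e)) * ((⟪A (J x), x⟫ + ⟪A x, x⟫) / 2) := by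
          apply mul_le_mul_of_nonneg_right _ (by linarith)
          nlinarith
        linarith

end SplitForm
end Abstract

/-! ### Lipschitz curves and concatenation -/

section Curves
open Filter Topology

/-- A Lipschitz function with nonnegative derivative almost everywhere does not decrease. -/
lemma le_of_ae_deriv_nonneg {u : ℝ → ℝ} {a b : ℝ} (hab : a ≤ b)
    (hu : ∃ K, LipschitzOnWith K u (Icc a b))
    (hd : ∀ᵐ s, s ∈ Ioo a b → ∃ v, HasDerivAt u v s ∧ 0 ≤ v) : u a ≤ u b := by
  obtain ⟨K, hK⟩ := hu
  have hac : AbsolutelyContinuousOnInterval u a b :=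
    LipschitzOnWith.absolutelyContinuousOnInterval (by rwa [uIcc_of_le hab])
  have h1 := hac.integral_deriv_eq_sub
  have h2 : 0 ≤ ∫ x in a..b, deriv u x := by
    rw [intervalIntegral.integral_of_le hab, integral_Ioc_eq_integral_Ioo]
    refine setIntegral_nonneg_of_ae_restrict ?_
    rw [EventuallyLE, ae_restrict_iff' measurableSet_Ioo]
    filter_upwards [hd] with s hs hmem
    obtain ⟨v, hv, hv0⟩ := hs hmem
    simpa [hv.deriv] using hv0
  linarith

lemma exists_lipschitzOn_comp {E F : Type*} [NormedAddCommGroup E] [NormedSpace ℝ E]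
    [NormedAddCommGroup F] [NormedSpace ℝ F] {G : E → F} {γ : ℝ → E} {a b : ℝ}
    (hγ : ∃ K, LipschitzOnWith K γ (Icc a b))
    (hG : ∀ s ∈ Icc a b, ContDiffAt ℝ 1 G (γ s)) :
    ∃ K, LipschitzOnWith K (fun s => G (γ s)) (Icc a b) := by
  obtain ⟨K, hK⟩ := hγ
  refine LocallyLipschitzOn.exists_lipschitzOnWith_of_compact isCompact_Icc fun s hs => ?_
  obtain ⟨K', t, ht, hK'⟩ := (hG s hs).exists_lipschitzOnWith
  refine ⟨K' * K, γ ⁻¹' t ∩ Icc a b, ?_, ?_⟩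
  · exact inter_mem (hK.continuousOn s hs ht) self_mem_nhdsWithin
  · exact hK'.comp (hK.mono inter_subset_right) fun r hr => hr.1

variable {E : Type*} [NormedAddCommGroup E] [NormedSpace ℝ E]

/-- `γ : [c, d] → B ∖ {0}` is a Lipschitz curve whose velocity satisfies the pointwise condition
`P` almost everywhere. -/
def CurveOn (P : E → E → Prop) (B : Set E) (γ : ℝ → E) (c d : ℝ) : Prop :=
  c < d ∧ (∀ s ∈ Icc c d, γ s ∈ B ∧ γ s ≠ 0) ∧ (∃ K, LipschitzOnWith K γ (Icc c d)) ∧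
    ∀ᵐ s, s ∈ Ioo c d → ∃ v, HasDerivAt γ v s ∧ P (γ s) v

/-- Some curve subject to `P` in `B ∖ {0}` runs from `p` at time `c` to `q` at time `d`. The
times are recorded so that curves can be concatenated without reparametrization. -/
def Joins (P : E → E → Prop) (B : Set E) (p : E) (c : ℝ) (q : E) (d : ℝ) : Prop :=
  ∃ γ, CurveOn P B γ c d ∧ γ c = p ∧ γ d = q

lemma Joins.trans {P : E → E → Prop} {B : Set E} {p q r : E} {c m d : ℝ}
    (h₁ : Joins P B p c q m) (h₂ : Joins P B q m r d) : Joins P B p c r d := by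
  obtain ⟨γ₁, ⟨hcm, hB₁, ⟨K₁, hK₁⟩, hd₁⟩, hp₁, hq₁⟩ := h₁
  obtain ⟨γ₂, ⟨hmd, hB₂, ⟨K₂, hK₂⟩, hd₂⟩, hp₂, hq₂⟩ := h₂
  set γ : ℝ → E := fun s => if s ≤ m then γ₁ s else γ₂ s with hγ
  have e1 : ∀ s, s ≤ m → γ s = γ₁ s := fun s hs => by simp [hγ, hs]
  have e2 : ∀ s, m ≤ s → γ s = γ₂ s := fun s hs => by
    rcases hs.eq_or_lt with rfl | hs
    · simp [hγ, hq₁, hp₂]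
    · simp [hγ, not_le.2 hs]
  refine ⟨γ, ⟨hcm.trans hmd, ?_, ?_, ?_⟩, ?_, ?_⟩
  · intro s hs
    rcases le_total s m with h | h
    · rw [e1 s h]; exact hB₁ s ⟨hs.1, h⟩
    · rw [e2 s h]; exact hB₂ s ⟨h, hs.2⟩
  · refine ⟨max K₁ K₂, ?_⟩
    have key : ∀ s ∈ Icc c d, ∀ t ∈ Icc c d, s ≤ t →
        dist (γ s) (γ t) ≤ (max K₁ K₂ : NNReal) * dist s t := by
      intro s hs t ht hst
      have hm1 : (K₁ : ℝ) ≤ (max K₁ K₂ : NNReal) := by exact_mod_cast le_max_left _ _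
      have hm2 : (K₂ : ℝ) ≤ (max K₁ K₂ : NNReal) := by exact_mod_cast le_max_right _ _
      rcases le_total t m with h | h
      · rw [e1 s (hst.trans h), e1 t h]
        exact (hK₁.dist_le_mul s ⟨hs.1, hst.trans h⟩ t ⟨ht.1, h⟩).trans (by gcongr)
      · rcases le_total s m with h' | h'
        · have a1 := hK₁.dist_le_mul s ⟨hs.1, h'⟩ m ⟨hcm.le, le_rfl⟩
          have a2 := hK₂.dist_le_mul m ⟨le_rfl, hmd.le⟩ t ⟨h, ht.2⟩
          rw [e1 s h', e2 t h]
          have a3 := dist_triangle (γ₁ s) (γ₁ m) (γ₂ t)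
          rw [hq₁, ← hp₂] at a3
          rw [hq₁, ← hp₂] at a1
          have a4 : dist s t = dist s m + dist m t := by
            rw [dist_comm s t, dist_comm s m, dist_comm m t, Real.dist_eq, Real.dist_eq,
              Real.dist_eq, abs_of_nonneg (by linarith), abs_of_nonneg (by linarith),
              abs_of_nonneg (by linarith)]
            ring
          rw [a4, mul_add]
          have b1 : (K₁ : ℝ) * dist s m ≤ (max K₁ K₂ : NNReal) * dist s m := by gcongr
          have b2 : (K₂ : ℝ) * dist m t ≤ (max K₁ K₂ : NNReal) * dist m t := by gcongr
          linarith
        · rw [e2 s h', e2 t h]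
          exact (hK₂.dist_le_mul s ⟨h', hs.2⟩ t ⟨h, ht.2⟩).trans (by gcongr)
    refine LipschitzOnWith.of_dist_le_mul fun s hs t ht => ?_
    rcases le_total s t with h | h
    · exact key s hs t ht h
    · rw [dist_comm, dist_comm s]; exact key t ht s hs h
  · have hne : ∀ᵐ s : ℝ, s ≠ m := by
      simp [ae_iff]
    filter_upwards [hd₁, hd₂, hne] with s h1 h2 hsm hs
    rcases lt_or_gt_of_ne hsm with h | h
    · obtain ⟨v, hv, hP⟩ := h1 ⟨hs.1, h⟩
      refine ⟨v, hv.congr_of_eventuallyEq ?_, by rwa [e1 s h.le]⟩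
      filter_upwards [Iio_mem_nhds h] with r hr using e1 r (le_of_lt hr)
    · obtain ⟨v, hv, hP⟩ := h2 ⟨h, hs.2⟩
      refine ⟨v, hv.congr_of_eventuallyEq ?_, by rwa [e2 s h.le]⟩
      filter_upwards [Ioi_mem_nhds h] with r hr using e2 r (le_of_lt hr)
  · rw [e1 c hcm.le, hp₁]
  · rw [e2 d hmd.le, hq₂]

lemma joins_line {P : E → E → Prop} {B : Set E} {p V : E} {c d : ℝ} (hcd : c < d)
    (hB : ∀ s ∈ Icc 0 (d - c), p + s • V ∈ B ∧ p + s • V ≠ 0 ∧ P (p + s • V) V) :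
    Joins P B p c (p + (d - c) • V) d := by
  have hder : ∀ s, HasDerivAt (fun s : ℝ => p + (s - c) • V) V s := fun s => by
    have := (((hasDerivAt_id s).sub_const c).smul_const V).const_add p
    simpa using this
  have hmem : ∀ s ∈ Icc c d, s - c ∈ Icc 0 (d - c) := fun s hs =>
    ⟨by linarith [hs.1], by linarith [hs.2]⟩
  refine ⟨fun s => p + (s - c) • V, ⟨hcd, fun s hs => ?_, ⟨‖V‖₊, ?_⟩, ?_⟩, by simp, rfl⟩
  · exact ⟨(hB _ (hmem s hs)).1, (hB _ (hmem s hs)).2.1⟩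
  · refine LipschitzOnWith.of_dist_le_mul fun s _ t _ => le_of_eq ?_
    rw [dist_add_left, dist_eq_norm, ← sub_smul, norm_smul, Real.dist_eq]
    simp [mul_comm]
  · exact Eventually.of_forall fun s hs =>
      ⟨V, hder s, (hB _ (hmem s (Ioo_subset_Icc_self hs))).2.2⟩

end Curves

/-! ### The deformation along `J` -/

section Push
open RealInnerProductSpace Filter Topology

variable {E : Type*} [NormedAddCommGroup E] [InnerProductSpace ℝ E]

/-- The scale-invariant depth `-⟪A x, x⟫ / ‖x‖²` of `x` below the zero level of `f`. -/
def depth (A : E →L[ℝ] E) (x : E) : ℝ := -⟪A x, x⟫ / ‖x‖ ^ 2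

/-- Amplitude of the deformation `push`; it decreases whenever the depth does. -/
def amp (A : E →L[ℝ] E) (M η : ℝ) (x : E) : ℝ := η * Real.exp (M * depth A x)

/-- The deformation `x ↦ x - η exp (M * depth x) • J x`. -/
def push (A J : E →L[ℝ] E) (M η : ℝ) (x : E) : E := x - amp A M η x • J x

/-- `V` is future-directed causal at `x` for the cones of aperture `k` around `A x = ∇f(x)`. -/
def FutureCausal (A : E →L[ℝ] E) (k : ℝ) (x V : E) : Prop :=
  k * ‖A x‖ * ‖V‖ ≤ ⟪A x, V⟫ ∧ 0 < ⟪A x, V⟫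

lemma contDiffAt_depth (A : E →L[ℝ] E) {x : E} (hx : x ≠ 0) :
    ContDiffAt ℝ 1 (depth A) x := by
  have h1 : ContDiffAt ℝ 1 (fun x : E => ⟪A x, x⟫) x :=
    ContDiffAt.inner ℝ A.contDiff.contDiffAt contDiffAt_id
  have h2 : ContDiffAt ℝ 1 (fun x : E => ‖x‖ ^ 2) x := (contDiff_norm_sq ℝ).contDiffAt
  exact h1.neg.div h2 (by positivity)

lemma contDiffAt_push (A J : E →L[ℝ] E) (M η : ℝ) {x : E} (hx : x ≠ 0) :
    ContDiffAt ℝ 1 (push A J M η) x := by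
  have h1 : ContDiffAt ℝ 1 (amp A M η) x :=
    contDiffAt_const.mul (contDiffAt_const.mul (contDiffAt_depth A hx)).exp
  exact contDiffAt_id.sub (h1.smul J.contDiff.contDiffAt)

variable {A J : E →L[ℝ] E} {μ K k : ℝ}

namespace SplitForm

lemma hasDerivAt_form (h : SplitForm A J μ K k) {γ : ℝ → E} {v : E} {s : ℝ}
    (hγ : HasDerivAt γ v s) :
    HasDerivAt (fun s => ⟪A (γ s), γ s⟫) (2 * ⟪A (γ s), v⟫) s := by
  have h1 : HasDerivAt (fun s => A (γ s)) (A v) s := A.hasFDerivAt.comp_hasDerivAt s hγ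
  have h2 := h1.inner ℝ hγ
  refine h2.congr_deriv ?_
  rw [h.symmA v, real_inner_comm (A (γ s)) v]
  ring

lemma hasDerivAt_depth (h : SplitForm A J μ K k) {γ : ℝ → E} {v : E} {s : ℝ}
    (hγ : HasDerivAt γ v s) (h0 : γ s ≠ 0) :
    HasDerivAt (fun s => depth A (γ s))
      (-(2 * (⟪A (γ s), v⟫ * ‖γ s‖ ^ 2 + (-⟪A (γ s), γ s⟫) * ⟪γ s, v⟫) / ‖γ s‖ ^ 4)) s := by
  have h1 := (h.hasDerivAt_form hγ).neg
  have h2 := hγ.norm_sq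
  have hX : ‖γ s‖ ≠ 0 := norm_ne_zero_iff.2 h0
  refine (h1.div h2 (by positivity)).congr_deriv ?_
  field_simp
  simp only [Pi.neg_apply]
  ring

lemma hasDerivAt_push (h : SplitForm A J μ K k) {γ : ℝ → E} {v : E} {s : ℝ} (M η : ℝ)
    (hγ : HasDerivAt γ v s) (h0 : γ s ≠ 0) :
    HasDerivAt (fun s => push A J M η (γ s))
      (v - amp A M η (γ s) • J v + (amp A M η (γ s) * (M *
        (2 * (⟪A (γ s), v⟫ * ‖γ s‖ ^ 2 + (-⟪A (γ s), γ s⟫) * ⟪γ s, v⟫) / ‖γ s‖ ^ 4)))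
          • J (γ s)) s := by
  have h1 : HasDerivAt (fun s => J (γ s)) (J v) s := J.hasFDerivAt.comp_hasDerivAt s hγ
  have h2 := (((h.hasDerivAt_depth hγ h0).const_mul M).exp).const_mul η
  refine (hγ.sub (h2.smul h1)).congr_deriv ?_
  simp only [amp]
  module

/-- The exponent `M` for which the decay of `amp` in `push` compensates the loss of causality in
`push_causal`. -/
def gain (μ K k : ℝ) : ℝ := 4 / (k * rate K k * (1 - k * K) * μ)

lemma gain_pos (h : SplitForm A J μ K k) : 0 < gain μ K k := by
  have := h.k_pos; have := h.rate_pos; have := h.mu_pos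
  have : 0 < 1 - k * K := by linarith [h.kK_lt]
  unfold gain; positivity

lemma amp_bounds (A : E →L[ℝ] E) {M η : ℝ} (hM : 0 ≤ M) (hη : 0 ≤ η) {x : E}
    (hn0 : 0 ≤ -⟪A x, x⟫) : η ≤ amp A M η x ∧ amp A M η x ≤ η * Real.exp (M * ‖A‖) := by
  have h0 : 0 ≤ depth A x := div_nonneg hn0 (by positivity)
  have h1 : depth A x ≤ ‖A‖ := by
    refine div_le_of_le_mul₀ (by positivity) (norm_nonneg _) ?_
    calc -⟪A x, x⟫ ≤ |⟪A x, x⟫| := neg_le_abs _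
      _ ≤ ‖A x‖ * ‖x‖ := abs_real_inner_le_norm _ _
      _ ≤ (‖A‖ * ‖x‖) * ‖x‖ := by gcongr; exact A.le_opNorm x
      _ = _ := by ring
  constructor
  · exact le_mul_of_one_le_right hη (Real.one_le_exp (by positivity))
  · unfold amp; gcongr

/-- Outside the radial cone the deformation `push`, with exponent `gain`, maps future causal
velocities to future causal velocities: the vector below is the velocity of the deformed curve, with
`ε` the amplitude at `x` (see `hasDerivAt_push`). -/
lemma push_velocity (h : SplitForm A J μ K k) {x V : E} (hx : x ≠ 0) {ε : ℝ}
    (hε0 : 0 ≤ ε) (hε : ε ≤ (1 - k * K) / 4)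
    (hn0 : 0 ≤ -⟪A x, x⟫) (hn : -⟪A x, x⟫ ≤ k * ‖A x‖ * ‖x‖)
    (hV : FutureCausal A k x V) :
    FutureCausal A k (x - ε • J x) (V - ε • J V + (ε * (gain μ K k *
      (2 * (⟪A x, V⟫ * ‖x‖ ^ 2 + (-⟪A x, x⟫) * ⟪x, V⟫) / ‖x‖ ^ 4))) • J x) := by
  have hk := h.k_pos
  have hM := h.gain_pos
  have hr := h.rate_pos
  have hmu := h.mu_pos
  have hX : 0 < ‖x‖ := norm_pos_iff.2 hx
  have hkK : 0 < 1 - k * K := by linarith [h.kK_lt]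
  have hQ := h.decay_nonneg hn0 hn hV.1
  refine h.push_causal hε0 hε (by positivity) hn0 hV.1 hV.2 fun hZ => ?_
  have hQ' := h.decay_strong hx hn0 hn hV.1 hZ
  set Q := ⟪A x, V⟫ * ‖x‖ ^ 2 + (-⟪A x, x⟫) * ⟪x, V⟫ with hQdef
  have hZle : ⟪A x, V⟫ + ⟪A (J x), V⟫ ≤ 2 * (‖A x‖ * ‖V‖) := by
    have h1 := real_inner_le_norm (A x) V
    have h2 := real_inner_le_norm (A (J x)) V
    rw [h.comm, h.norm_J, ← h.comm] at h2
    linarith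
  have hlow := h.lower x
  calc 4 * ε * (⟪A x, V⟫ + ⟪A (J x), V⟫) ≤ 4 * ε * (2 * (‖A x‖ * ‖V‖)) := by gcongr
    _ = ε * (gain μ K k * (2 * (rate K k * k * ‖A x‖ * ‖V‖ * ‖x‖ ^ 2) / ‖x‖ ^ 4)) *
        ((1 - k * K) * (μ * ‖x‖ ^ 2)) := by
        unfold gain
        have := hX.ne'; have := hk.ne'; have := hr.ne'; have := hmu.ne'; have := hkK.ne'
        field_simp
    _ ≤ _ := by gcongr

/-- A causal curve that runs into the critical point comes arbitrarily close to the radial cone.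
Otherwise `depth - δ μ log ‖γ‖²` would be nonincreasing, whereas the logarithm tends to `-∞`. -/
lemma exists_near_cone (h : SplitForm A J μ K k) {γ : ℝ → E} {c d δ : ℝ} (hcd : c < d)
    (hδ : 0 < δ)
    (hlip : ∃ L, LipschitzOnWith L γ (Icc c d)) (h0 : ∀ s ∈ Ico c d, γ s ≠ 0) (hd : γ d = 0)
    (hf : ∀ s ∈ Icc c d, 0 ≤ -⟪A (γ s), γ s⟫)
    (hder : ∀ᵐ s, s ∈ Ioo c d → ∃ v, HasDerivAt γ v s ∧ FutureCausal A k (γ s) v) :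
    ∃ s ∈ Ioo c d, (k - δ) * (‖A (γ s)‖ * ‖γ s‖) ≤ -⟪A (γ s), γ s⟫ := by
  by_contra! hcon
  have hk := h.k_pos
  have hmu := h.mu_pos
  have hA : ∀ x, μ * ‖x‖ ≤ ‖A x‖ := fun x => by
    rcases eq_or_ne x 0 with rfl | hx
    · simp
    · have h1 := h.lower x
      have h2 := real_inner_le_norm (A (J x)) x
      rw [h.comm, h.norm_J, ← h.comm] at h2
      have hX : 0 < ‖x‖ := norm_pos_iff.2 hx
      refine le_of_mul_le_mul_right ?_ hX
      nlinarith
  set m := (c + d) / 2 with hm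
  have hm1 : c < m := by rw [hm]; linarith
  have hm2 : m < d := by rw [hm]; linarith
  -- `depth - δ μ log ‖γ‖²` is nonincreasing up to the first zero
  have key : ∀ s ∈ Ioo m d, δ * μ * Real.log (‖γ m‖ ^ 2) - depth A (γ m) ≤
      δ * μ * Real.log (‖γ s‖ ^ 2) := by
    intro s hs
    have hne : ∀ r ∈ Icc m s, γ r ≠ 0 := fun r hr =>
      h0 r ⟨hm1.le.trans hr.1, hr.2.trans_lt hs.2⟩
    have hmono : δ * μ * Real.log (‖γ m‖ ^ 2) - depth A (γ m) ≤
        δ * μ * Real.log (‖γ s‖ ^ 2) - depth A (γ s) := by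
      refine le_of_ae_deriv_nonneg (u := fun s => δ * μ * Real.log (‖γ s‖ ^ 2) - depth A (γ s))
        hs.1.le ?_ ?_
      · refine exists_lipschitzOn_comp
          (G := fun x => δ * μ * Real.log (‖x‖ ^ 2) - depth A x) ?_ ?_
        · obtain ⟨L, hL⟩ := hlip
          exact ⟨L, hL.mono (Icc_subset_Icc hm1.le hs.2.le)⟩
        · intro r hr
          have hr0 : 0 < ‖γ r‖ := norm_pos_iff.2 (hne r hr)
          refine ContDiffAt.sub (contDiffAt_const.mul ?_) (contDiffAt_depth A (hne r hr))
          exact (contDiff_norm_sq ℝ).contDiffAt.log (by positivity)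
      · filter_upwards [hder] with r hr hrm
        have hrcd : r ∈ Ioo c d := ⟨hm1.trans hrm.1, hrm.2.trans hs.2⟩
        obtain ⟨v, hv, hP, -⟩ := hr hrcd
        have hr0 := hne r (Ioo_subset_Icc_self hrm)
        have hX : 0 < ‖γ r‖ := norm_pos_iff.2 hr0
        refine ⟨_, ((hv.norm_sq.log (by positivity)).const_mul (δ * μ)).sub
          (h.hasDerivAt_depth hv hr0), ?_⟩
        have hc := hcon r hrcd
        have hn0 := hf r (Ioo_subset_Icc_self hrcd)
        have hAx := hA (γ r)
        generalize γ r = x at *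
        have heq : δ * μ * (2 * ⟪x, v⟫ / ‖x‖ ^ 2) -
            -(2 * (⟪A x, v⟫ * ‖x‖ ^ 2 + -⟪A x, x⟫ * ⟪x, v⟫) / ‖x‖ ^ 4) =
            2 * (δ * μ * ⟪x, v⟫ * ‖x‖ ^ 2 +
              (⟪A x, v⟫ * ‖x‖ ^ 2 + -⟪A x, x⟫ * ⟪x, v⟫)) / ‖x‖ ^ 4 := by
          field_simp
          ring
        rw [heq]
        refine div_nonneg (mul_nonneg two_pos.le ?_) (by positivity)
        have hp0 : 0 ≤ ⟪A x, v⟫ := le_trans (by positivity) hP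
        rcases le_total 0 ⟪x, v⟫ with he | he
        · positivity
        · have e1 := (abs_le.1 (abs_real_inner_le_norm x v)).1
          have a1 := mul_le_mul_of_nonneg_right hP (sq_nonneg ‖x‖)
          have a2 := mul_le_mul_of_nonpos_right hc.le he
          have a3 : 0 ≤ k * (‖A x‖ * ‖x‖) * (‖x‖ * ‖v‖ + ⟪x, v⟫) :=
            mul_nonneg (by positivity) (by linarith)
          have a4 : δ * ‖x‖ * ‖A x‖ * ⟪x, v⟫ ≤ δ * ‖x‖ * (μ * ‖x‖) * ⟪x, v⟫ := by
            apply mul_le_mul_of_nonpos_right _ he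
            gcongr
          nlinarith
    have : 0 ≤ depth A (γ s) := div_nonneg (hf s ⟨(hm1.trans hs.1).le, hs.2.le⟩) (by positivity)
    linarith
  -- but `log ‖γ‖² → -∞` at the zero
  obtain ⟨L, hL⟩ := hlip
  have hcont : Tendsto γ (𝓝[Ioo m d] d) (𝓝 0) := by
    have := (hL.continuousOn d ⟨hcd.le, le_rfl⟩).tendsto
    rw [hd] at this
    exact this.mono_left (nhdsWithin_mono _ fun r hr => ⟨(hm1.trans hr.1).le, hr.2.le⟩)
  have hne : ∀ᶠ s in 𝓝[Ioo m d] d, s ∈ Ioo m d := self_mem_nhdsWithin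
  have hto : Tendsto (fun s => ‖γ s‖ ^ 2) (𝓝[Ioo m d] d) (𝓝[≠] 0) := by
    refine tendsto_nhdsWithin_iff.2 ⟨by simpa using (hcont.norm.pow 2), ?_⟩
    filter_upwards [hne] with s hs
    have := norm_pos_iff.2 (h0 s ⟨(hm1.trans hs.1).le, hs.2⟩)
    simp [this.ne']
  have hlog := (Real.tendsto_log_nhdsNE_zero.comp hto).const_mul_atBot (mul_pos hδ hmu)
  have : (𝓝[Ioo m d] d).NeBot := by
    rw [nhdsWithin_Ioo_eq_nhdsLT hm2]; infer_instance
  obtain ⟨s, hs, hsm⟩ := ((hlog.eventually_lt_atBot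
    (δ * μ * Real.log (‖γ m‖ ^ 2) - depth A (γ m))).and hne).exists
  exact absurd (key s hsm) (not_le.2 hs)

end SplitForm
end Push

/-! ### Reaching the unstable plane -/

section Reach
open RealInnerProductSpace Filter Topology

variable {E : Type*} [NormedAddCommGroup E] [InnerProductSpace ℝ E]
variable {A J : E →L[ℝ] E} {μ K k : ℝ}

namespace SplitForm

/-- From a point of the radial cone a straight causal segment leads to the unstable plane
`J q = -q`. -/
lemma reach_of_cone (h : SplitForm A J μ K k) {R : ℝ} {x : E} (hxB : x ∈ Metric.ball (0 : E) R)
    (hx : k * ‖A x‖ * ‖x‖ < -⟪A x, x⟫) (s : ℝ) :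
    ∃ q, q ≠ 0 ∧ J q = -q ∧
      Joins (FutureCausal A k) (Metric.ball (0 : E) R) x s q (s + 1) := by
  obtain ⟨e, he0, he1, hline⟩ := h.exists_line hx
  set V := -x + (e / 2) • (x - J x) with hV
  have hk := h.k_pos
  have hend : x + (1 : ℝ) • V = (e / 2) • (x - J x) := by rw [hV]; module
  have hpos : ∀ t ∈ Icc (0 : ℝ) 1, 0 < ⟪A (x + t • V), V⟫ := fun t ht =>
    lt_of_le_of_lt (by positivity) (hline t ht)
  have hne : ∀ t ∈ Icc (0 : ℝ) 1, x + t • V ≠ 0 := fun t ht h0 => by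
    have := hpos t ht
    simp [h0] at this
  have hendB : x + V ∈ Metric.ball (0 : E) R := by
    rw [mem_ball_zero_iff] at hxB ⊢
    rw [one_smul] at hend
    rw [hend, norm_smul, Real.norm_eq_abs, abs_of_pos (by linarith)]
    have := norm_sub_le x (J x)
    rw [h.norm_J] at this
    nlinarith [norm_nonneg x, norm_nonneg (x - J x)]
  have hB : ∀ t ∈ Icc (0 : ℝ) 1, x + t • V ∈ Metric.ball (0 : E) R := fun t ht => by
    have := (convex_ball (0 : E) R).add_smul_sub_mem hxB hendB ht
    simpa using this
  refine ⟨x + (1 : ℝ) • V, hne 1 (by simp), ?_, ?_⟩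
  · rw [hend, map_smul, map_sub, h.invol]; module
  · have := joins_line (P := FutureCausal A k) (B := Metric.ball (0 : E) R) (p := x) (V := V)
      (c := s) (d := s + 1) (by linarith) ?_
    · simpa using this
    · intro t ht
      have ht' : t ∈ Icc (0 : ℝ) 1 := by simpa using ht
      exact ⟨hB t ht', hne t ht', (hline t ht').le, hpos t ht'⟩

/-- Timelike vectors form an open set of the tangent bundle. -/
lemma exists_cone_nhds (h : SplitForm A J μ K k) {x V : E}
    (hV : k * ‖A x‖ * ‖V‖ < ⟪A x, V⟫) :
    ∃ r > 0, ∀ x' V', ‖x' - x‖ < r → ‖V' - V‖ < r → FutureCausal A k x' V' := by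
  have hopen : IsOpen {w : E × E | k * ‖A w.1‖ * ‖w.2‖ < ⟪A w.1, w.2⟫} :=
    isOpen_lt (by fun_prop) (by fun_prop)
  obtain ⟨r, hr, hsub⟩ := Metric.isOpen_iff.1 hopen (x, V) hV
  refine ⟨r, hr, fun x' V' h1 h2 => ?_⟩
  have hmem : (x', V') ∈ Metric.ball (x, V) r := by
    rw [Metric.mem_ball, Prod.dist_eq, dist_eq_norm, dist_eq_norm]
    exact max_lt h1 h2
  have h3 : k * ‖A x'‖ * ‖V'‖ < ⟪A x', V'⟫ := hsub hmem
  have hk := h.k_pos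
  exact ⟨h3.le, lt_of_le_of_lt (by positivity) h3⟩

/-- Strict timelikeness at one point of differentiability leaves room: from `γ s₀` a straight causal
segment reaches every point of a neighborhood of some later `γ s₁`. -/
lemma exists_step (h : SplitForm A J μ K k) {R : ℝ} {γ : ℝ → E} {s₀ d : ℝ} {V : E}
    (hsd : s₀ < d) (hB : γ s₀ ∈ Metric.ball (0 : E) R) (hder : HasDerivAt γ V s₀)
    (hV : k * ‖A (γ s₀)‖ * ‖V‖ < ⟪A (γ s₀), V⟫) :
    ∃ s₁ ∈ Ioo s₀ d, ∃ ρ > 0, ∀ w, ‖w - γ s₁‖ < ρ →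
      Joins (FutureCausal A k) (Metric.ball (0 : E) R) (γ s₀) s₀ w s₁ := by
  obtain ⟨r₀, hr₀, hcone⟩ := h.exists_cone_nhds hV
  rw [mem_ball_zero_iff] at hB
  obtain ⟨r, hr, hr1, hr2⟩ : ∃ r > 0, r ≤ r₀ ∧ r ≤ R - ‖γ s₀‖ :=
    ⟨min r₀ (R - ‖γ s₀‖), lt_min hr₀ (by linarith), min_le_left _ _, min_le_right _ _⟩
  have hlo := (hasDerivAt_iff_isLittleO.1 hder).def (show (0 : ℝ) < r / 2 by linarith)
  have hlo' : ∀ᶠ s in 𝓝[>] s₀, ‖γ s - γ s₀ - (s - s₀) • V‖ ≤ r / 2 * ‖s - s₀‖ :=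
    hlo.filter_mono nhdsWithin_le_nhds
  have hmin : s₀ < min d (s₀ + r / (‖V‖ + r)) := lt_min hsd (by
    have : 0 < r / (‖V‖ + r) := by positivity
    linarith)
  obtain ⟨s₁, hs1, hs2⟩ := (hlo'.and (Ioo_mem_nhdsGT hmin)).exists
  have hs3 : s₁ < d := hs2.2.trans_le (min_le_left _ _)
  have hs4 : s₁ - s₀ < r / (‖V‖ + r) := by linarith [hs2.2.trans_le (min_le_right d _)]
  have he : 0 < s₁ - s₀ := by linarith [hs2.1]
  refine ⟨s₁, ⟨hs2.1, hs3⟩, r / 2 * (s₁ - s₀), by positivity, fun w hw => ?_⟩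
  rw [Real.norm_eq_abs, abs_of_pos he] at hs1
  set U := (s₁ - s₀)⁻¹ • (w - γ s₀) with hU
  have hUw : w = γ s₀ + (s₁ - s₀) • U := by
    rw [hU, smul_smul, mul_inv_cancel₀ he.ne', one_smul]; abel
  have hUV : ‖U - V‖ < r := by
    have e1 : (s₁ - s₀) • (U - V) = (w - γ s₁) + (γ s₁ - γ s₀ - (s₁ - s₀) • V) := by
      rw [smul_sub, hU, smul_smul, mul_inv_cancel₀ he.ne', one_smul]; abel
    have e2 : (s₁ - s₀) * ‖U - V‖ < (s₁ - s₀) * r := by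
      calc (s₁ - s₀) * ‖U - V‖ = ‖(s₁ - s₀) • (U - V)‖ := by
            rw [norm_smul, Real.norm_eq_abs, abs_of_pos he]
        _ ≤ ‖w - γ s₁‖ + ‖γ s₁ - γ s₀ - (s₁ - s₀) • V‖ := by rw [e1]; exact norm_add_le _ _
        _ < r / 2 * (s₁ - s₀) + r / 2 * (s₁ - s₀) := by linarith
        _ = _ := by ring
    exact lt_of_mul_lt_mul_left e2 he.le
  have hUn : ‖U‖ < ‖V‖ + r := by
    have := norm_add_le V (U - V)
    rw [add_sub_cancel] at this
    linarith
  rw [hUw]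
  refine joins_line hs2.1 fun t ht => ?_
  have hclose : ‖t • U‖ < r := by
    rw [norm_smul, Real.norm_eq_abs, abs_of_nonneg ht.1]
    calc t * ‖U‖ ≤ (s₁ - s₀) * (‖V‖ + r) := by
          apply mul_le_mul ht.2 hUn.le (norm_nonneg _) he.le
      _ < r := by rwa [lt_div_iff₀ (by positivity)] at hs4
  have hP : FutureCausal A k (γ s₀ + t • U) U :=
    hcone _ _ (by rw [add_sub_cancel_left]; linarith) (by linarith)
  refine ⟨?_, ?_, hP⟩
  · rw [mem_ball_zero_iff]
    linarith [norm_add_le (γ s₀) (t • U)]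
  · intro h0
    have := hP.2
    simp [h0] at this

/-- A point from which a timelike curve reaches the critical point can also be joined causally,
avoiding the critical point, to a nonzero point of the unstable plane. -/
theorem reach_of_zero (h : SplitForm A J μ K k) {R : ℝ} {γ : ℝ → E} {c d : ℝ} (hcd : c < d)
    (hB : ∀ s ∈ Icc c d, γ s ∈ Metric.ball (0 : E) R)
    (hlip : ∃ L, LipschitzOnWith L γ (Icc c d)) (h0 : ∀ s ∈ Ico c d, γ s ≠ 0) (hd : γ d = 0)
    (hder : ∀ᵐ s, s ∈ Ioo c d → ∃ v, HasDerivAt γ v s ∧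
      k * ‖A (γ s)‖ * ‖v‖ < ⟪A (γ s), v⟫) :
    ∃ q, q ≠ 0 ∧ J q = -q ∧
      ∃ t, Joins (FutureCausal A k) (Metric.ball (0 : E) R) (γ c) c q t := by
  have hk := h.k_pos
  have hkK : 0 < 1 - k * K := by linarith [h.kK_lt]
  obtain ⟨L, hL⟩ := hlip
  have hfc : ∀ {x V : E}, k * ‖A x‖ * ‖V‖ < ⟪A x, V⟫ → FutureCausal A k x V := fun hxV =>
    ⟨hxV.le, lt_of_le_of_lt (by positivity) hxV⟩
  have hder' : ∀ᵐ s, s ∈ Ioo c d → ∃ v, HasDerivAt γ v s ∧ FutureCausal A k (γ s) v := by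
    filter_upwards [hder] with s hs hm
    obtain ⟨v, hv, hP⟩ := hs hm
    exact ⟨v, hv, hfc hP⟩
  have hf : ∀ s ∈ Icc c d, 0 ≤ -⟪A (γ s), γ s⟫ := by
    intro s hs
    have : ⟪A (γ s), γ s⟫ ≤ ⟪A (γ d), γ d⟫ := by
      refine le_of_ae_deriv_nonneg (u := fun s => ⟪A (γ s), γ s⟫) hs.2 ?_ ?_
      · refine exists_lipschitzOn_comp (G := fun x => ⟪A x, x⟫)
          ⟨L, hL.mono (Icc_subset_Icc hs.1 le_rfl)⟩ fun r _ => ?_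
        exact ContDiffAt.inner ℝ A.contDiff.contDiffAt contDiffAt_id
      · filter_upwards [hder'] with r hr hm
        obtain ⟨v, hv, hP⟩ := hr ⟨hs.1.trans_lt hm.1, hm.2⟩
        exact ⟨_, h.hasDerivAt_form hv, by linarith [hP.2]⟩
    rw [hd] at this
    simp at this
    linarith
  have hinit : ∀ s ∈ Ioo c d,
      Joins (FutureCausal A k) (Metric.ball (0 : E) R) (γ c) c (γ s) s := fun s hs => by
    refine ⟨γ, ⟨hs.1, fun r hr => ⟨hB r ⟨hr.1, hr.2.trans hs.2.le⟩,
      h0 r ⟨hr.1, hr.2.trans_lt hs.2⟩⟩, ⟨L, hL.mono (Icc_subset_Icc le_rfl hs.2.le)⟩, ?_⟩,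
      rfl, rfl⟩
    filter_upwards [hder'] with r hr hm using hr ⟨hm.1, hm.2.trans hs.2⟩
  by_cases hC : ∃ s ∈ Ioo c d, k * ‖A (γ s)‖ * ‖γ s‖ < -⟪A (γ s), γ s⟫
  · obtain ⟨s, hs, hsC⟩ := hC
    obtain ⟨q, hq0, hqJ, hj⟩ := h.reach_of_cone (hB s (Ioo_subset_Icc_self hs)) hsC s
    exact ⟨q, hq0, hqJ, _, (hinit s hs).trans hj⟩
  push Not at hC
  obtain ⟨s₀, hs₀, V, hV, hVP⟩ : ∃ s₀ ∈ Ioo c d, ∃ v, HasDerivAt γ v s₀ ∧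
      k * ‖A (γ s₀)‖ * ‖v‖ < ⟪A (γ s₀), v⟫ := by
    have hr := (ae_restrict_iff' (μ := volume) measurableSet_Ioo).2 hder
    have : (ae (volume.restrict (Ioo c d))).NeBot := by
      rw [ae_neBot, Ne, Measure.restrict_eq_zero]
      simp [hcd]
    obtain ⟨s, hs, hm⟩ := (hr.and (ae_restrict_mem measurableSet_Ioo)).exists
    exact ⟨s, hm, hs⟩
  obtain ⟨s₁, hs₁, ρ, hρ, hstep⟩ :=
    h.exists_step hs₀.2 (hB s₀ (Ioo_subset_Icc_self hs₀)) hV hVP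
  have hs₁cd : s₁ ∈ Ioo c d := ⟨hs₀.1.trans hs₁.1, hs₁.2⟩
  obtain ⟨m, hm, hmax⟩ := isCompact_Icc.exists_isMaxOn (nonempty_Icc.2 hcd.le)
    hL.continuousOn.norm
  set b := ‖γ m‖ with hb
  have hb0 : 0 ≤ b := norm_nonneg _
  have hbR : b < R := by simpa using hB m hm
  have hbmax : ∀ s ∈ Icc c d, ‖γ s‖ ≤ b := fun s hs => hmax hs
  set M := gain μ K k with hM
  have hMpos : 0 < M := h.gain_pos
  -- the size `θ` of the deformation keeps the deformed curve in the ball and its start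
  -- within reach of `γ s₀`
  obtain ⟨θ, hθ0, hθ1, hθ2, hθ3⟩ : ∃ θ : ℝ, 0 < θ ∧ θ ≤ (1 - k * K) / 4 ∧
      θ * b < R - b ∧ θ * b < ρ := by
    have t1 : ∀ y : ℝ, 0 < y → ∀ᶠ θ : ℝ in 𝓝[>] 0, θ * b < y := fun y hy => by
      have : Tendsto (fun θ : ℝ => θ * b) (𝓝[>] 0) (𝓝 (0 * b)) :=
        (tendsto_id.mul_const b).mono_left nhdsWithin_le_nhds
      rw [zero_mul] at this
      exact this.eventually_lt_const hy
    have t0 : ∀ᶠ θ : ℝ in 𝓝[>] (0 : ℝ), θ ∈ Ioo 0 ((1 - k * K) / 4) :=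
      Ioo_mem_nhdsGT (by linarith)
    obtain ⟨θ, h1, h2, h3⟩ := (t0.and ((t1 (R - b) (by linarith)).and (t1 ρ hρ))).exists
    exact ⟨θ, h1.1, h1.2.le, h2, h3⟩
  set η := θ / Real.exp (M * ‖A‖) with hη
  have hη0 : 0 < η := by positivity
  have hηθ : η * Real.exp (M * ‖A‖) = θ := by rw [hη]; field_simp
  have hamp : ∀ s ∈ Icc c d, η ≤ amp A M η (γ s) ∧ amp A M η (γ s) ≤ θ := fun s hs => by
    have := amp_bounds A hMpos.le hη0.le (hf s hs)
    rwa [hηθ] at this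
  have hpushdist : ∀ s ∈ Icc c d, ‖push A J M η (γ s) - γ s‖ ≤ θ * b := fun s hs => by
    have h1 := hamp s hs
    rw [push, sub_sub_cancel_left, norm_neg, norm_smul, h.norm_J, Real.norm_eq_abs,
      abs_of_nonneg (hη0.le.trans h1.1)]
    exact mul_le_mul h1.2 (hbmax s hs) (norm_nonneg _) hθ0.le
  have hpushB : ∀ s ∈ Icc c d, push A J M η (γ s) ∈ Metric.ball (0 : E) R := fun s hs => by
    rw [mem_ball_zero_iff]
    have h1 := hpushdist s hs
    have h2 := hbmax s hs
    have h3 := norm_add_le (γ s) (push A J M η (γ s) - γ s)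
    rw [add_sub_cancel] at h3
    linarith
  have hkK' : 0 < k * K := mul_pos hk h.K_pos
  have hpush0 : ∀ s ∈ Ico c d, push A J M η (γ s) ≠ 0 := fun s hs hz => by
    have h1 := hamp s (Ico_subset_Icc_self hs)
    have h2 : γ s = amp A M η (γ s) • J (γ s) := sub_eq_zero.1 hz
    have h3 := congrArg norm h2
    rw [norm_smul, h.norm_J, Real.norm_eq_abs, abs_of_nonneg (hη0.le.trans h1.1)] at h3
    have h4 := norm_pos_iff.2 (h0 s hs)
    nlinarith
  have hj2 : Joins (FutureCausal A k) (Metric.ball (0 : E) R) (γ s₀) s₀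
      (push A J M η (γ s₁)) s₁ :=
    hstep _ ((hpushdist s₁ (Ioo_subset_Icc_self hs₁cd)).trans_lt hθ3)
  obtain ⟨δ, hδ0, hδ⟩ : ∃ δ : ℝ, 0 < δ ∧ δ * K < η * (1 - k * K) := by
    have hK := h.K_pos
    refine ⟨η * (1 - k * K) / (2 * K), by positivity, ?_⟩
    have : 0 < η * (1 - k * K) := by positivity
    field_simp
    linarith
  obtain ⟨s₂, hs₂, hnear⟩ := h.exists_near_cone (γ := γ) (c := s₁) (d := d) hs₁.2 hδ0
    ⟨L, hL.mono (Icc_subset_Icc hs₁cd.1.le le_rfl)⟩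
    (fun s hs => h0 s ⟨hs₁cd.1.le.trans hs.1, hs.2⟩) hd
    (fun s hs => hf s ⟨hs₁cd.1.le.trans hs.1, hs.2⟩)
    (by filter_upwards [hder'] with r hr hm using hr ⟨hs₁cd.1.trans hm.1, hm.2⟩)
  have hs₂cd : s₂ ∈ Ioo c d := ⟨hs₁cd.1.trans hs₂.1, hs₂.2⟩
  have hj3 : Joins (FutureCausal A k) (Metric.ball (0 : E) R) (push A J M η (γ s₁)) s₁
      (push A J M η (γ s₂)) s₂ := by
    have hsub : Icc s₁ s₂ ⊆ Ico c d := fun r hr =>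
      ⟨hs₁cd.1.le.trans hr.1, hr.2.trans_lt hs₂.2⟩
    refine ⟨fun s => push A J M η (γ s), ⟨hs₂.1, fun r hr =>
      ⟨hpushB r (Ico_subset_Icc_self (hsub hr)), hpush0 r (hsub hr)⟩, ?_, ?_⟩, rfl, rfl⟩
    · exact exists_lipschitzOn_comp ⟨L, hL.mono (hsub.trans Ico_subset_Icc_self)⟩
        fun r hr => contDiffAt_push A J M η (h0 r (hsub hr))
    · filter_upwards [hder'] with r hr hm
      have hrcd : r ∈ Ioo c d := ⟨hs₁cd.1.trans hm.1, hm.2.trans hs₂.2⟩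
      obtain ⟨v, hv, hP⟩ := hr hrcd
      have hr0 := h0 r (Ioo_subset_Ico_self hrcd)
      have hr1 := hamp r (Ioo_subset_Icc_self hrcd)
      exact ⟨_, h.hasDerivAt_push M η hv hr0, h.push_velocity hr0 (hη0.le.trans hr1.1)
        (hr1.2.trans hθ1) (hf r (Ioo_subset_Icc_self hrcd)) (hC r hrcd) hP⟩
  have hamp₂ := hamp s₂ (Ioo_subset_Icc_self hs₂cd)
  have hcone : k * ‖A (push A J M η (γ s₂))‖ * ‖push A J M η (γ s₂)‖ <
      -⟪A (push A J M η (γ s₂)), push A J M η (γ s₂)⟫ := by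
    refine h.push_enters (h0 s₂ (Ioo_subset_Ico_self hs₂cd)) (hη0.le.trans hamp₂.1)
      ?_ hδ0.le (hδ.trans_le ?_) (hC s₂ hs₂cd) hnear
    · linarith [hamp₂.2]
    · exact mul_le_mul_of_nonneg_right hamp₂.1 hkK.le
  obtain ⟨q, hq0, hqJ, hj4⟩ :=
    h.reach_of_cone (hpushB s₂ (Ioo_subset_Icc_self hs₂cd)) hcone s₂
  exact ⟨q, hq0, hqJ, _, (((hinit s₀ hs₀).trans hj2).trans hj3).trans hj4⟩

end SplitForm
end Reach

/-! ### The Morse form in coordinates -/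

section Concrete
open RealInnerProductSpace Filter Topology

variable {n : ℕ}

/-- The diagonal operator with entries `w`. -/
def diagL (w : Fin n → ℝ) : EuclideanSpace ℝ (Fin n) →L[ℝ] EuclideanSpace ℝ (Fin n) :=
  LinearMap.toContinuousLinearMap
    { toFun := fun x => WithLp.toLp 2 fun i => w i * x i
      map_add' := fun x y => by ext i; simp [mul_add]
      map_smul' := fun c x => by ext i; simp; ring }

lemma diagL_apply (w : Fin n → ℝ) (x : EuclideanSpace ℝ (Fin n)) (i : Fin n) :
    diagL w x i = w i * x i := rfl

lemma inner_eq_sum (x y : EuclideanSpace ℝ (Fin n)) : ⟪x, y⟫ = ∑ i, x i * y i := by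
  simp [PiLp.inner_apply, mul_comm]

lemma norm_sq_eq_sum (x : EuclideanSpace ℝ (Fin n)) : ‖x‖ ^ 2 = ∑ i, x i ^ 2 := by
  simp [EuclideanSpace.norm_sq_eq]

lemma inner_diagL (w : Fin n → ℝ) (x V : EuclideanSpace ℝ (Fin n)) :
    ⟪diagL w x, V⟫ = ∑ i, w i * x i * V i := by
  simp [inner_eq_sum, diagL_apply]

lemma norm_sq_diagL (w : Fin n → ℝ) (x : EuclideanSpace ℝ (Fin n)) :
    ‖diagL w x‖ ^ 2 = ∑ i, w i ^ 2 * x i ^ 2 := by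
  simp [norm_sq_eq_sum, diagL_apply, mul_pow]

lemma morseForm_eq {a : Fin n → ℝ} {ζ k : ℝ} (hk : ζ * k ^ 2 = 1)
    (x V : EuclideanSpace ℝ (Fin n)) :
    morseForm n a ζ x V = ζ * ((k * ‖diagL a x‖ * ‖V‖) ^ 2 - ⟪diagL a x, V⟫ ^ 2) := by
  have : (k * ‖diagL a x‖ * ‖V‖) ^ 2 = k ^ 2 * (‖diagL a x‖ ^ 2 * ‖V‖ ^ 2) := by ring
  rw [this, mul_sub, ← mul_assoc, hk, one_mul, norm_sq_diagL, inner_diagL, morseForm]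

/-- The diagonal of `J`: `-1` on the first `lam` coordinates, `+1` on the others. -/
def signs (n lam : ℕ) (i : Fin n) : ℝ := if (i : ℕ) < lam then -1 else 1

lemma signs_mul_self (lam : ℕ) (i : Fin n) : signs n lam i * signs n lam i = 1 := by
  unfold signs; split_ifs <;> norm_num

lemma mul_signs {a : Fin n → ℝ} {lam : ℕ}
    (hneg : ∀ i : Fin n, (i : ℕ) < lam → a i < 0)
    (hpos : ∀ i : Fin n, lam ≤ (i : ℕ) → 0 < a i) (i : Fin n) :
    a i * signs n lam i = |a i| := by
  unfold signs
  split_ifs with hi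
  · rw [abs_of_neg (hneg i hi)]; ring
  · rw [abs_of_pos (hpos i (not_lt.1 hi))]; ring

/-- The Hessian `diag a` and the splitting into unstable and stable coordinates form a `SplitForm`
with aperture `k = ζ^(-1/2)` and anisotropy `K = √(max |aᵢ| / min |aᵢ|)`; the bound `k * K < 1` is
the anisotropy hypothesis. -/
lemma exists_splitForm [Nonempty (Fin n)] {a : Fin n → ℝ} {ζ : ℝ} {lam : ℕ}
    (ha : ∀ i, a i ≠ 0) (hζ : 1 < ζ)
    (hneg : ∀ i : Fin n, (i : ℕ) < lam → a i < 0)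
    (hpos : ∀ i : Fin n, lam ≤ (i : ℕ) → 0 < a i)
    (haniso : ∀ i j : Fin n, |a i| / |a j| < ζ) :
    ∃ μ K k : ℝ, ζ * k ^ 2 = 1 ∧ SplitForm (diagL a) (diagL (signs n lam)) μ K k := by
  obtain ⟨j, hj⟩ := Finite.exists_min fun i => |a i|
  obtain ⟨l, hl⟩ := Finite.exists_max fun i => |a i|
  set μ := |a j| with hμ
  set L := |a l| with hL
  have hμ0 : 0 < μ := abs_pos.2 (ha j)
  have hL0 : 0 < L := abs_pos.2 (ha l)
  have hζ0 : 0 < ζ := by linarith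
  have hform : ∀ x : EuclideanSpace ℝ (Fin n),
      ⟪diagL a (diagL (signs n lam) x), x⟫ = ∑ i, |a i| * x i ^ 2 := fun x => by
    rw [inner_diagL]
    refine Finset.sum_congr rfl fun i _ => ?_
    rw [diagL_apply, ← mul_signs hneg hpos i]; ring
  have hlow : ∀ x : EuclideanSpace ℝ (Fin n),
      μ * ‖x‖ ^ 2 ≤ ∑ i, |a i| * x i ^ 2 := fun x => by
    rw [norm_sq_eq_sum, Finset.mul_sum]
    gcongr with i
    exact hj i
  have hupp : ∀ x : EuclideanSpace ℝ (Fin n),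
      ‖diagL a x‖ ^ 2 ≤ L * ∑ i, |a i| * x i ^ 2 := fun x => by
    rw [norm_sq_diagL, Finset.mul_sum]
    refine Finset.sum_le_sum fun i _ => ?_
    rw [← sq_abs (a i), sq |a i|, mul_assoc]
    exact mul_le_mul_of_nonneg_right (hl i) (by positivity)
  refine ⟨μ, √(L / μ), √(1 / ζ), ?_, ?_⟩
  · rw [Real.sq_sqrt (by positivity)]; field_simp
  constructor
  · intro x y
    rw [real_inner_comm _ x, inner_diagL, inner_diagL]
    exact Finset.sum_congr rfl fun i _ => by ring
  · intro x y
    rw [real_inner_comm _ x, inner_diagL, inner_diagL]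
    exact Finset.sum_congr rfl fun i _ => by ring
  · intro x
    ext i
    rw [diagL_apply, diagL_apply, ← mul_assoc, signs_mul_self, one_mul]
  · intro x
    ext i
    simp only [diagL_apply]; ring
  · exact hμ0
  · positivity
  · positivity
  · rw [← Real.sqrt_mul (by positivity), Real.sqrt_lt' one_pos]
    have := haniso l j
    rw [one_div, inv_mul_eq_div, div_lt_iff₀ hζ0]
    linarith
  · intro x
    rw [hform]; exact hlow x
  · intro x
    rw [hform]
    set S := ∑ i, |a i| * x i ^ 2 with hS
    have hS0 : 0 ≤ S := Finset.sum_nonneg fun i _ => by positivity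
    refine le_of_pow_le_pow_left₀ two_ne_zero (by positivity) ?_
    have h1 := hlow x
    have h2 := hupp x
    rw [mul_pow, mul_pow, Real.sq_sqrt (by positivity)]
    calc ‖diagL a x‖ ^ 2 * ‖x‖ ^ 2 ≤ (L * S) * (S / μ) := by
          gcongr
          rw [le_div_iff₀ hμ0]; linarith
      _ = L / μ * S ^ 2 := by ring

end Concrete

/-- Under the index condition (`aᵢ < 0` for `i < λ`,
`aᵢ > 0` for `i ≥ λ`, with `2 ≤ λ ≤ n−2`) and the anisotropy bounds
(`1/ζ < |aᵢ|/|aⱼ| < ζ` and `5/8 ≤ |aᵢ|/|aⱼ| ≤ 8/5`), every point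
`q ∈ B ∖ {0}` in the chronological past of the critical point causally
precedes (avoiding `0`) a point `q̃ ≠ 0` lying in the unstable plane
(`q̃ᵢ = 0` for `i ≥ λ`, i.e. `ρ(q̃) = 0` and `r(q̃) > 0`), so `f(q̃) < 0`. -/
theorem reach_unstable_plane
    (n : ℕ) (hn : 2 ≤ n) (a : Fin n → ℝ) (ha : ∀ i, a i ≠ 0)
    (ζ : ℝ) (hζ : 1 < ζ) (R : ℝ) (hR : 0 < R)
    (B : Set (EuclideanSpace ℝ (Fin n))) (hB : B = Metric.ball 0 R)
    (lam : ℕ) (hlam₁ : 2 ≤ lam) (hlam₂ : lam ≤ n - 2)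
    (hneg : ∀ i : Fin n, (i : ℕ) < lam → a i < 0)
    (hpos : ∀ i : Fin n, lam ≤ (i : ℕ) → 0 < a i)
    (haniso : ∀ i j : Fin n,
      1 / ζ < |a i| / |a j| ∧ |a i| / |a j| < ζ ∧
      5 / 8 ≤ |a i| / |a j| ∧ |a i| / |a j| ≤ 8 / 5)
    (q : EuclideanSpace ℝ (Fin n)) (hq : q ∈ B) (hq0 : q ≠ 0)
    (hqpast : chronFull n a ζ B q 0) :
    ∃ qt : EuclideanSpace ℝ (Fin n),
      causalDot n a ζ B q qt ∧
      (∀ i : Fin n, lam ≤ (i : ℕ) → qt i = 0) ∧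
      qt ≠ 0 ∧
      (1 / 2) * ∑ i, a i * (qt i) ^ 2 < 0 := by
  subst hB
  have : Nonempty (Fin n) := ⟨⟨0, by omega⟩⟩
  obtain ⟨μ, K, k, hk, h⟩ := exists_splitForm ha hζ hneg hpos fun i j => (haniso i j).2.1
  have hk0 := h.k_pos
  obtain ⟨γ, c, d, ⟨hcd, hB, ⟨L, hL⟩, hder⟩, hc, hd⟩ := hqpast
  rw [ae_restrict_iff' measurableSet_Icc] at hder
  -- only the part of the curve before its first visit to the critical point matters
  obtain ⟨d₀, ⟨hd₀, hγ0⟩, hleast⟩ : ∃ d₀, IsLeast {s | s ∈ Icc c d ∧ γ s = 0} d₀ := by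
    refine IsCompact.exists_isLeast ?_ ⟨d, ⟨hcd.le, le_rfl⟩, hd⟩
    have : IsClosed (Icc c d ∩ γ ⁻¹' {0}) :=
      hL.continuousOn.preimage_isClosed_of_isClosed isClosed_Icc isClosed_singleton
    exact isCompact_Icc.of_isClosed_subset this inter_subset_left
  have hcd₀ : c < d₀ := lt_of_le_of_ne hd₀.1 fun e => hq0 (by rw [← hc, e, hγ0])
  have hne : ∀ s ∈ Ico c d₀, γ s ≠ 0 := fun s hs h0 =>
    absurd (hleast ⟨⟨hs.1, hs.2.le.trans hd₀.2⟩, h0⟩) (not_le.2 hs.2)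
  obtain ⟨qt, hqt0, hJ, t, σ, ⟨hct, hσ, hσL, hσd⟩, hσc, hσt⟩ :=
    h.reach_of_zero (R := R) hcd₀ (fun s hs => hB s ⟨hs.1, hs.2.trans hd₀.2⟩)
      ⟨L, hL.mono (Icc_subset_Icc le_rfl hd₀.2)⟩ hne hγ0 (by
        filter_upwards [hder] with s hs hm
        obtain ⟨v, hv, hg, hp⟩ := hs ⟨hm.1.le, hm.2.le.trans hd₀.2⟩ (hne s ⟨hm.1.le, hm.2⟩)
        refine ⟨v, hv, ?_⟩
        rw [morseForm_eq hk] at hg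
        rw [← inner_diagL] at hp
        refine lt_of_pow_lt_pow_left₀ 2 hp.le ?_
        have := (pos_iff_neg_of_mul_neg hg).1 (by linarith)
        linarith)
  refine ⟨qt, Or.inr ⟨σ, c, t, ⟨hct, fun s hs => (hσ s hs).1, hσL, ?_⟩, hσc.trans hc, hσt,
    fun s hs => (hσ s hs).2⟩, ?_, hqt0, ?_⟩
  · rw [← Measure.restrict_congr_set Ioo_ae_eq_Icc, ae_restrict_iff' measurableSet_Ioo]
    filter_upwards [hσd] with s hs hm _
    obtain ⟨v, hv, hP, hP0⟩ := hs hm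
    refine ⟨v, hv, ⟨?_, ?_⟩, by rwa [← inner_diagL]⟩
    · rw [morseForm_eq hk]
      have h1 : (k * ‖diagL a (σ s)‖ * ‖v‖) ^ 2 ≤ _ := pow_le_pow_left₀ (by positivity) hP 2
      exact mul_nonpos_of_nonneg_of_nonpos (by linarith) (by linarith)
    · rintro rfl
      simp at hP0
  · intro i hi
    have h1 := congrArg (fun x : EuclideanSpace ℝ (Fin n) => x i) hJ
    simp only [diagL_apply, signs, if_neg (not_lt.2 hi), PiLp.neg_apply] at h1
    linarith
  · have h1 := h.form_pos hqt0
    rw [hJ, map_neg, inner_neg_left, inner_diagL] at h1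
    have h2 : ∑ i, a i * qt i ^ 2 = ∑ i, a i * qt i * qt i :=
      Finset.sum_congr rfl fun i _ => by ring
    linarith

end
end
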